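/- arXiv:1706.09924 — 2 statements merged into one kernel-verified Lean document; each statement's English description precedes it below -/
import Mathlib

section
/- For r > 0 and x, y ∈ ℝ^d with |x| > r, |y| > r, set ζ_r(x,y) = (|x|^2 - r^2)(|y|^2 - r^2)/(r^2 |x - y|^2). Then for all x, v ∈ ℝ^d with |v| < r < |x|, (Γ((d+α)/2) Γ(d/2) / (π^d |Γ(-α/2)| Γ(α/2)^2)) ∫_{|y|>r} ( ∫_0^{ζ_r(x,y)} (u+1)^{-d/2} u^{α/2-1} du ) · |x - y|^{α-d} |v - y|^{-(α+d)} dy = π^{-(d/2+1)} Γ(d/2) sin(πα/2) · (|x|^2 - r^2)^{α/2} / ( (r^2 - |v|^2)^{α/2} |x - v|^d ). (This identity expresses that integrating out the position prior to first entry in Corollary 1.5(i) recovers the Blumenthal–Getoor–Ray first-entrance density of the ball of radius r.) -/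
open MeasureTheory Real Set

/-!
Inversion in the sphere centred at `x` of radius `√(|x|² - r²)` preserves the ball of radius `r`.
Substituting it for `y` turns `ζ_r(x, y)` into `|z|² / r² - 1` and absorbs the factor
`|x - y|^(α - d)`, so that the integral becomes one in which `x` enters only through the inverse
point of `v`. A second inversion, in the sphere of radius `r` about the origin, moves the integral
inside the ball.

There the inner integral is split over concentric balls: after scaling and Tonelli's theorem one
needs the integrals over the unit ball of `(1 - |w|²)^(α/2 - 1)` times a power of the Kelvin kernel
`1 - 2⟨b, w⟩ + |b|² |w|²`. The inversion about `b / |b|²` that preserves the unit ball reflects the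
exponent of the kernel and reduces the question to the exponent `1 - d/2`, for which the integral
does not depend on `b`: differentiating the reflection symmetry along a ray yields a contiguity
relation which says precisely that the radial derivative vanishes. The value at `b = 0` is a beta
integral, and the integral over the radii that remains is elementary.
-/

open EuclideanGeometry Module

section Interval

theorem lintegral_Ioo_comp_mul_deriv {g g' : ℝ → ℝ} {a b : ℝ} (hab : a ≤ b)
    (hcont : ContinuousOn g (Icc a b)) (hderiv : ∀ x ∈ Ioo a b, HasDerivAt g (g' x) x)
    (hpos : ∀ x ∈ Ioo a b, 0 < g' x) (f : ℝ → ENNReal) :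
    ∫⁻ x in Ioo a b, ENNReal.ofReal (g' x) * f (g x) = ∫⁻ u in Ioo (g a) (g b), f u := by
  have hmono : StrictMonoOn g (Icc a b) :=
    strictMonoOn_of_deriv_pos (convex_Icc a b) hcont fun x hx => by
      rw [interior_Icc] at hx
      exact (hderiv x hx).deriv ▸ hpos x hx
  have himage : g '' Ioo a b = Ioo (g a) (g b) := hcont.image_Ioo_of_strictMonoOn hab hmono
  rw [← himage, lintegral_image_eq_lintegral_deriv_mul_of_monotoneOn measurableSet_Ioo
    (fun x hx => (hderiv x hx).hasDerivWithinAt) (hmono.mono Ioo_subset_Icc_self).monotoneOn]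

theorem lintegral_Ioo_ofReal_deriv {g g' : ℝ → ℝ} {a b : ℝ} (hab : a ≤ b)
    (hcont : ContinuousOn g (Icc a b)) (hderiv : ∀ x ∈ Ioo a b, HasDerivAt g (g' x) x)
    (hpos : ∀ x ∈ Ioo a b, 0 < g' x) :
    ∫⁻ x in Ioo a b, ENNReal.ofReal (g' x) = ENNReal.ofReal (g b - g a) := by
  simpa using lintegral_Ioo_comp_mul_deriv hab hcont hderiv hpos 1

theorem lintegral_Ioo_mul_sq_sub_sq_rpow {s a t : ℝ} (hs : -1 < s) (ha : 0 ≤ a) (hat : a ≤ t) :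
    ∫⁻ τ in Ioo a t, ENNReal.ofReal (2 * (s + 1) * τ * (τ ^ 2 - a ^ 2) ^ s) =
      ENNReal.ofReal ((t ^ 2 - a ^ 2) ^ (s + 1)) := by
  have hs' : 0 < s + 1 := by linarith
  have hgap : ∀ τ ∈ Ioo a t, 0 < τ ∧ 0 < τ ^ 2 - a ^ 2 := fun τ hτ =>
    ⟨ha.trans_lt hτ.1, by nlinarith [hτ.1]⟩
  rw [lintegral_Ioo_ofReal_deriv (g := fun τ => (τ ^ 2 - a ^ 2) ^ (s + 1)) hat
    (.rpow_const (by fun_prop) fun _ _ => .inr hs'.le) (fun τ hτ => ?_) fun τ hτ => ?_]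
  · simp [zero_rpow hs'.ne']
  · convert ((hasDerivAt_pow 2 τ).sub_const (a ^ 2)).rpow_const (p := s + 1)
      (.inl (hgap τ hτ).2.ne') using 1
    simp only [add_sub_cancel_right, Nat.cast_ofNat, Nat.add_one_sub_one, pow_one]
    ring
  · obtain ⟨hτ0, hτa⟩ := hgap τ hτ
    positivity

theorem lintegral_setLIntegral_Ioo_comm {X : Type*} [MeasurableSpace X] (μ : Measure X) [SFinite μ]
    {h : X → ℝ} (hh : Measurable h) {a : ℝ} (ha : ∀ x, a ≤ h x) {F : X → ℝ → ENNReal}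
    (hF : Measurable (Function.uncurry F)) (t : ℝ) :
    ∫⁻ x, (∫⁻ τ in Ioo (h x) t, F x τ) ∂μ = ∫⁻ τ in Ioo a t, ∫⁻ x in {x | h x < τ}, F x τ ∂μ := by
  set G : X → ℝ → ENNReal := fun x τ =>
    {q : X × ℝ | h q.1 < q.2}.indicator (Function.uncurry F) (x, τ)
  have hG : Measurable (Function.uncurry G) :=
    hF.indicator (measurableSet_lt (by fun_prop) (by fun_prop))
  have hleft : ∀ x, ∫⁻ τ in Ioo (h x) t, F x τ = ∫⁻ τ in Ioo a t, G x τ := fun x => by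
    have : Ioo (h x) t = Ioi (h x) ∩ Ioo a t := by grind
    rw [this, ← setLIntegral_indicator measurableSet_Ioi]
    rfl
  have hright : ∀ τ, ∫⁻ x in {x | h x < τ}, F x τ ∂μ = ∫⁻ x, G x τ ∂μ := fun τ => by
    rw [← lintegral_indicator (measurableSet_lt hh measurable_const)]
    rfl
  simp_rw [hleft, hright]
  exact lintegral_lintegral_swap hG.aemeasurable

end Interval

theorem lintegral_comp_smul_of_pos {E : Type*} [NormedAddCommGroup E] [NormedSpace ℝ E]
    [FiniteDimensional ℝ E] [MeasurableSpace E] [BorelSpace E] (μ : Measure E)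
    [μ.IsAddHaarMeasure] (f : E → ENNReal) {τ : ℝ} (hτ : 0 < τ) :
    ENNReal.ofReal (τ ^ finrank ℝ E) * ∫⁻ w, f (τ • w) ∂μ = ∫⁻ w, f w ∂μ := by
  have hmap : μ.map (Homeomorph.smulOfNeZero τ hτ.ne').toMeasurableEquiv =
      ENNReal.ofReal |(τ ^ finrank ℝ E)⁻¹| • μ := Measure.map_addHaar_smul μ hτ.ne'
  have h := lintegral_map_equiv (μ := μ) f (Homeomorph.smulOfNeZero τ hτ.ne').toMeasurableEquiv
  rw [hmap, lintegral_smul_measure, smul_eq_mul, abs_of_pos (by positivity)] at h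
  change _ * ∫⁻ w, f ((Homeomorph.smulOfNeZero τ hτ.ne').toMeasurableEquiv w) ∂μ = _
  rw [← h, ← mul_assoc, ← ENNReal.ofReal_mul (by positivity), mul_inv_cancel₀ (by positivity),
    ENNReal.ofReal_one, one_mul]

section BallWeight

theorem lintegral_Ioo_rpow_mul_one_sub_rpow {p q : ℝ} (hp : 0 < p) (hq : 0 < q) :
    ∫⁻ u in Ioo (0 : ℝ) 1, ENNReal.ofReal (u ^ (p - 1) * (1 - u) ^ (q - 1)) =
      ENNReal.ofReal (ProbabilityTheory.beta p q) := by
  have hβ := ProbabilityTheory.beta_pos hp hq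
  have h := ProbabilityTheory.lintegral_betaPDF_eq_one hp hq
  simp_rw [ProbabilityTheory.lintegral_betaPDF, mul_assoc,
    ENNReal.ofReal_mul (one_div_pos.2 hβ).le] at h
  rw [lintegral_const_mul' _ _ ENNReal.ofReal_ne_top, one_div, ENNReal.ofReal_inv_of_pos hβ,
    mul_comm] at h
  exact (ENNReal.eq_inv_of_mul_eq_one_left h).trans (inv_inv _)

theorem lintegral_Ioo_pow_mul_one_sub_sq_rpow {k : ℕ} (hk : k ≠ 0) {s : ℝ} (hs : -1 < s) :
    ∫⁻ τ in Ioo (0 : ℝ) 1, ENNReal.ofReal (τ ^ (k - 1) * (1 - τ ^ 2) ^ s) =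
      ENNReal.ofReal (2⁻¹ * ProbabilityTheory.beta (k / 2) (s + 1)) := by
  have : (0 : ℝ) < k := by positivity
  have hsub := lintegral_Ioo_comp_mul_deriv (g := fun τ : ℝ => τ ^ 2) (g' := fun τ => 2 * τ)
    zero_le_one (by fun_prop) (fun τ _ => by simpa using hasDerivAt_pow 2 τ)
    (fun τ hτ => mul_pos two_pos hτ.1)
    fun u => ENNReal.ofReal (2⁻¹ * (u ^ ((k : ℝ) / 2 - 1) * (1 - u) ^ (s + 1 - 1)))
  have hhalf : (0 : ℝ) ≤ 2⁻¹ := by norm_num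
  simp_rw [ENNReal.ofReal_mul hhalf, zero_pow two_ne_zero, one_pow] at hsub
  rw [lintegral_const_mul' _ _ ENNReal.ofReal_ne_top,
    lintegral_Ioo_rpow_mul_one_sub_rpow (by positivity) (by linarith)] at hsub
  rw [ENNReal.ofReal_mul hhalf, ← hsub]
  refine setLIntegral_congr_fun measurableSet_Ioo fun τ ⟨hτ0, _⟩ => ?_
  have hpow : τ ^ (k - 1) = τ * (τ ^ 2) ^ ((k : ℝ) / 2 - 1) := by
    rw [← rpow_natCast, Nat.cast_pred (Nat.pos_of_ne_zero hk), ← rpow_natCast_mul hτ0.le,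
      show (k : ℝ) - 1 = 1 + (2 : ℕ) * ((k : ℝ) / 2 - 1) by push_cast; ring, rpow_add hτ0, rpow_one]
  rw [← ENNReal.ofReal_mul hhalf, ← ENNReal.ofReal_mul (by positivity), hpow]
  congr 1
  ring_nf

variable {E : Type*} [NormedAddCommGroup E]

theorem one_sub_norm_sq_pos {w : E} (hw : ‖w‖ < 1) : 0 < 1 - ‖w‖ ^ 2 :=
  sub_pos.2 ((sq_lt_one_iff₀ (norm_nonneg w)).2 hw)

theorem setIntegral_ball_fun_norm [NormedSpace ℝ E] [FiniteDimensional ℝ E] [Nontrivial E]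
    [MeasurableSpace E] [BorelSpace E] (μ : Measure E) [μ.IsAddHaarMeasure] (f : ℝ → ℝ) (r : ℝ) :
    ∫ w in Metric.ball (0 : E) r, f ‖w‖ ∂μ =
      finrank ℝ E * μ.real (Metric.ball 0 1) * ∫ τ in Ioo 0 r, τ ^ (finrank ℝ E - 1) * f τ := by
  have hball : ∀ w : E, (Metric.ball (0 : E) r).indicator (fun w => f ‖w‖) w =
      (Iio r).indicator f ‖w‖ := fun w => by simp [indicator]
  rw [← integral_indicator measurableSet_ball, integral_congr_ae (.of_forall hball),
    integral_fun_norm_addHaar, nsmul_eq_mul, smul_eq_mul, mul_assoc, ← Ioi_inter_Iio,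
    ← setIntegral_indicator measurableSet_Iio]
  simp_rw [smul_eq_mul, indicator_mul_right]

variable [InnerProductSpace ℝ E] [FiniteDimensional ℝ E] [MeasurableSpace E] [BorelSpace E]
  [Nontrivial E]

theorem integrableOn_ball_one_sub_norm_sq_rpow {s : ℝ} (hs : -1 < s) :
    IntegrableOn (fun w : E => (1 - ‖w‖ ^ 2) ^ s) (Metric.ball 0 1) := by
  rw [integrableOn_fun_norm_addHaar volume (f := fun τ => (1 - τ ^ 2) ^ s)]
  refine ⟨Measurable.aestronglyMeasurable (by fun_prop), ?_⟩
  rw [hasFiniteIntegral_iff_ofReal]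
  · simp only [smul_eq_mul, lintegral_Ioo_pow_mul_one_sub_sq_rpow finrank_pos.ne' hs]
    exact ENNReal.ofReal_lt_top
  · refine ae_restrict_of_forall_mem measurableSet_Ioo fun τ ⟨hτ0, hτ1⟩ => ?_
    have : 0 ≤ 1 - τ ^ 2 := by nlinarith
    simp only [Pi.zero_apply, smul_eq_mul]
    positivity

theorem integral_ball_one_sub_norm_sq_rpow {s : ℝ} (hs : -1 < s) :
    ∫ w in Metric.ball (0 : E) 1, (1 - ‖w‖ ^ 2) ^ s =
      π ^ ((finrank ℝ E : ℝ) / 2) * Gamma (s + 1) / Gamma (finrank ℝ E / 2 + s + 1) := by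
  have hn : (0 : ℝ) < finrank ℝ E := by exact_mod_cast finrank_pos
  have hradial : ∫ τ in Ioo (0 : ℝ) 1, τ ^ (finrank ℝ E - 1) * (1 - τ ^ 2) ^ s =
      2⁻¹ * ProbabilityTheory.beta (finrank ℝ E / 2) (s + 1) := by
    have hβ := ProbabilityTheory.beta_pos (half_pos hn) (show 0 < s + 1 by linarith)
    rw [integral_eq_lintegral_of_nonneg_ae _ (Measurable.aestronglyMeasurable (by fun_prop)),
      lintegral_Ioo_pow_mul_one_sub_sq_rpow finrank_pos.ne' hs,
      ENNReal.toReal_ofReal (by positivity)]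
    refine ae_restrict_of_forall_mem measurableSet_Ioo fun τ ⟨hτ0, hτ1⟩ => ?_
    have : 0 ≤ 1 - τ ^ 2 := by nlinarith
    simp only [Pi.zero_apply]
    positivity
  have hvol : volume.real (Metric.ball (0 : E) 1) =
      π ^ ((finrank ℝ E : ℝ) / 2) / (finrank ℝ E / 2 * Gamma (finrank ℝ E / 2)) := by
    have := Gamma_pos_of_pos (half_pos hn)
    rw [measureReal_def, InnerProductSpace.volume_ball, ENNReal.ofReal_one, one_pow, one_mul,
      Gamma_add_one (half_pos hn).ne', ENNReal.toReal_ofReal (by positivity), sqrt_eq_rpow,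
      ← rpow_mul_natCast pi_pos.le]
    ring_nf
  have := Gamma_pos_of_pos (half_pos hn)
  rw [setIntegral_ball_fun_norm volume fun τ => (1 - τ ^ 2) ^ s, hradial, hvol,
    ProbabilityTheory.beta, add_assoc]
  field_simp

end BallWeight

section Inversion

variable {E : Type*} [NormedAddCommGroup E] [InnerProductSpace ℝ E]

theorem norm_inversion_sq_sub_sq {c z : E} {r R : ℝ} (hR : R ^ 2 = ‖c‖ ^ 2 - r ^ 2) (hz : z ≠ c) :
    ‖inversion c R z‖ ^ 2 - r ^ 2 = (R / dist z c) ^ 2 * (‖z‖ ^ 2 - r ^ 2) := by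
  have hzc : ‖z - c‖ ≠ 0 := norm_ne_zero_iff.2 (sub_ne_zero.2 hz)
  have hinner : inner ℝ (z - c) c = (‖z‖ ^ 2 - ‖z - c‖ ^ 2 - ‖c‖ ^ 2) / 2 := by
    have := norm_add_sq_real (z - c) c
    rw [sub_add_cancel] at this
    linarith
  have hinv : inversion c R z = (R / ‖z - c‖) ^ 2 • (z - c) + c := by
    simp [inversion, dist_eq_norm]
  rw [hinv, norm_add_sq_real, norm_smul, real_inner_smul_left, hinner, dist_eq_norm,
    norm_of_nonneg (sq_nonneg _), div_pow, hR]
  field_simp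
  ring

theorem norm_inversion_lt_iff {c z : E} {r R : ℝ} (hr : 0 ≤ r) (hR0 : R ≠ 0)
    (hR : R ^ 2 = ‖c‖ ^ 2 - r ^ 2) (hz : z ≠ c) : ‖inversion c R z‖ < r ↔ ‖z‖ < r := by
  have hscale : 0 < (R / dist z c) ^ 2 := by have := dist_pos.2 hz; positivity
  rw [← sq_lt_sq₀ (norm_nonneg _) hr, ← sub_neg, norm_inversion_sq_sub_sq hR hz,
    ← neg_pos, ← mul_neg, mul_pos_iff_of_pos_left hscale, neg_pos, sub_neg,
    sq_lt_sq₀ (norm_nonneg _) hr]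

theorem lt_norm_inversion_iff {c z : E} {r R : ℝ} (hr : 0 ≤ r) (hR0 : R ≠ 0)
    (hR : R ^ 2 = ‖c‖ ^ 2 - r ^ 2) (hz : z ≠ c) : r < ‖inversion c R z‖ ↔ r < ‖z‖ := by
  have hscale : 0 < (R / dist z c) ^ 2 := by have := dist_pos.2 hz; positivity
  rw [← sq_lt_sq₀ hr (norm_nonneg _), ← sub_pos, norm_inversion_sq_sub_sq hR hz,
    mul_pos_iff_of_pos_left hscale, sub_pos, sq_lt_sq₀ hr (norm_nonneg _)]

variable [FiniteDimensional ℝ E] [MeasurableSpace E] [BorelSpace E]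

theorem integral_eq_integral_inversion [Nontrivial E] {F : Type*} [NormedAddCommGroup F]
    [NormedSpace ℝ F] (c : E) {R : ℝ} (hR : R ≠ 0) (f : E → F) :
    ∫ y, f y = ∫ z, (R / dist z c) ^ (2 * finrank ℝ E) • f (inversion c R z) := by
  have himage : inversion c R '' {c}ᶜ = {c}ᶜ := by
    rw [image_compl_eq (inversion_bijective c hR), image_singleton, inversion_self]
  have hdet (z : E) : |((R / dist z c) ^ 2 • ((ℝ ∙ (z - c))ᗮ.reflection : E →L[ℝ] E)).det| =
      (R / dist z c) ^ (2 * finrank ℝ E) := by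
    change |LinearMap.det ((R / dist z c) ^ 2 • (ℝ ∙ (z - c))ᗮ.reflection.toLinearMap)| = _
    rw [LinearMap.det_smul, Submodule.det_reflection, abs_mul, abs_neg_one_pow, mul_one,
      abs_of_nonneg (by positivity), pow_mul]
  have hsub := integral_image_eq_integral_abs_det_fderiv_smul volume
    (measurableSet_singleton c).compl (fun z hz => (hasFDerivAt_inversion hz).hasFDerivWithinAt)
    (inversion_injective c hR).injOn f
  simp_rw [hdet] at hsub
  rwa [himage, restrict_compl_singleton] at hsub

theorem setIntegral_eq_setIntegral_inversion [Nontrivial E] {F : Type*} [NormedAddCommGroup F]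
    [NormedSpace ℝ F] {c : E} {R : ℝ} (hR : R ≠ 0) {s t : Set E} (hs : MeasurableSet s)
    (ht : MeasurableSet t) (hst : ∀ z ≠ c, inversion c R z ∈ s ↔ z ∈ t) (f : E → F) :
    ∫ y in s, f y = ∫ z in t, (R / dist z c) ^ (2 * finrank ℝ E) • f (inversion c R z) := by
  rw [← integral_indicator hs, ← integral_indicator ht, integral_eq_integral_inversion c hR]
  refine integral_congr_ae ?_
  filter_upwards [Measure.ae_ne volume c] with z hz
  by_cases hzt : z ∈ t
  · rw [indicator_of_mem hzt, indicator_of_mem ((hst z hz).2 hzt)]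
  · rw [indicator_of_notMem hzt, indicator_of_notMem ((hst z hz).not.2 hzt), smul_zero]

end Inversion

section Kelvin

variable {E : Type*} [NormedAddCommGroup E] [InnerProductSpace ℝ E]

/-- The Kelvin kernel `|b|² |w - b / |b|²|²`, that is the squared distance from `w` to the inverse
point of `b` in the unit sphere, rescaled so that it extends continuously to `b = 0`. -/
noncomputable def kelvinSq (b w : E) : ℝ := 1 - 2 * inner ℝ b w + ‖b‖ ^ 2 * ‖w‖ ^ 2

theorem kelvinSq_zero_left (w : E) : kelvinSq 0 w = 1 := by simp [kelvinSq]

theorem kelvinSq_smul_right (t : ℝ) (b w : E) : kelvinSq b (t • w) = kelvinSq (t • b) w := by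
  simp only [kelvinSq, real_inner_smul_left, real_inner_smul_right, norm_smul, mul_pow]
  ring

theorem kelvinSq_eq_of_ne_zero {b : E} (hb : b ≠ 0) (w : E) :
    kelvinSq b w = ‖b‖ ^ 2 * dist w ((‖b‖ ^ 2)⁻¹ • b) ^ 2 := by
  have : ‖b‖ ≠ 0 := norm_ne_zero_iff.2 hb
  rw [dist_eq_norm, norm_sub_sq_real, inner_smul_right, norm_smul, real_inner_comm, kelvinSq,
    norm_inv, norm_pow, norm_norm]
  field_simp
  ring

theorem kelvinSq_pos {b w : E} (hb : ‖b‖ < 1) (hw : ‖w‖ ≤ 1) : 0 < kelvinSq b w := by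
  have hbw : ‖b‖ * ‖w‖ < 1 := mul_lt_one_of_nonneg_of_lt_one_left (norm_nonneg b) hb hw
  calc 0 < (1 - ‖b‖ * ‖w‖) ^ 2 := pow_pos (sub_pos.2 hbw) 2
    _ ≤ kelvinSq b w := by
      unfold kelvinSq
      linarith [real_inner_le_norm b w]

theorem kelvinSq_pos_of_norm_smul_lt_one {a w : E} {t : ℝ} (ht : 0 < t) (ha : ‖t • a‖ < 1)
    (hw : ‖w‖ ≤ t) : 0 < kelvinSq a w := by
  have hw1 : ‖t⁻¹ • w‖ ≤ 1 := by
    rwa [norm_smul, norm_inv, norm_of_nonneg ht.le, inv_mul_le_one₀ ht]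
  simpa [← kelvinSq_smul_right, smul_smul, ht.ne'] using kelvinSq_pos ha hw1

@[fun_prop]
theorem continuous_kelvinSq : Continuous fun p : E × E => kelvinSq p.1 p.2 := by
  unfold kelvinSq
  fun_prop

theorem exists_forall_kelvinSq_rpow_le [FiniteDimensional ℝ E] {ρ : ℝ} (hρ : ρ < 1) (e : ℝ) :
    ∃ M, ∀ b w : E, ‖b‖ ≤ ρ → ‖w‖ ≤ 1 → kelvinSq b w ^ e ≤ M := by
  have hcompact : IsCompact (Metric.closedBall (0 : E) ρ ×ˢ Metric.closedBall (0 : E) 1) :=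
    (isCompact_closedBall _ _).prod (isCompact_closedBall _ _)
  have hcont : ContinuousOn (fun p : E × E => kelvinSq p.1 p.2 ^ e)
      (Metric.closedBall 0 ρ ×ˢ Metric.closedBall 0 1) :=
    .rpow_const (by fun_prop) fun p hp => .inl (kelvinSq_pos
      ((mem_closedBall_zero_iff.1 hp.1).trans_lt hρ) (mem_closedBall_zero_iff.1 hp.2)).ne'
  obtain ⟨M, hM⟩ := hcompact.exists_bound_of_continuousOn hcont
  exact ⟨M, fun b w hb hw => (le_abs_self _).trans
    (hM (b, w) ⟨mem_closedBall_zero_iff.2 hb, mem_closedBall_zero_iff.2 hw⟩)⟩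

theorem one_sub_norm_sq_rpow_mul_kelvinSq_rpow_nonneg {b w : E} (s e : ℝ) (hb : ‖b‖ < 1)
    (hw : ‖w‖ < 1) : 0 ≤ (1 - ‖w‖ ^ 2) ^ s * kelvinSq b w ^ e := by
  have := kelvinSq_pos hb hw.le
  have := one_sub_norm_sq_pos hw
  positivity

end Kelvin

theorem norm_smul_le_norm_smul_of_le {E : Type*} [SeminormedAddCommGroup E] [NormedSpace ℝ E]
    {τ t : ℝ} (hτ : 0 ≤ τ) (hτt : τ ≤ t) (a : E) : ‖τ • a‖ ≤ ‖t • a‖ := by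
  rw [norm_smul, norm_smul, norm_of_nonneg hτ, norm_of_nonneg (hτ.trans hτt)]
  gcongr

section BallPotential

variable {E : Type*} [NormedAddCommGroup E] [InnerProductSpace ℝ E]

theorem norm_inv_norm_sq_smul_self_sq_sub_one {b : E} (hb : b ≠ 0) :
    ‖(‖b‖ ^ 2)⁻¹ • b‖ ^ 2 - 1 ^ 2 = (1 - ‖b‖ ^ 2) / ‖b‖ ^ 2 := by
  have hb' : ‖b‖ ≠ 0 := norm_ne_zero_iff.2 hb
  rw [norm_smul, norm_inv, norm_pow, norm_norm]
  field_simp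

theorem sq_div_dist_eq_div_kelvinSq {b : E} {R : ℝ} (hb : b ≠ 0)
    (hR : R ^ 2 = (1 - ‖b‖ ^ 2) / ‖b‖ ^ 2) (w : E) :
    (R / dist w ((‖b‖ ^ 2)⁻¹ • b)) ^ 2 = (1 - ‖b‖ ^ 2) / kelvinSq b w := by
  rw [div_pow, hR, kelvinSq_eq_of_ne_zero hb, ← div_div]

theorem kelvinSq_inversion {b : E} {R : ℝ} (hb : b ≠ 0)
    (hR : R ^ 2 = (1 - ‖b‖ ^ 2) / ‖b‖ ^ 2) (w : E) :
    kelvinSq b (inversion ((‖b‖ ^ 2)⁻¹ • b) R w) = (1 - ‖b‖ ^ 2) ^ 2 / kelvinSq b w := by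
  have hb' : ‖b‖ ≠ 0 := norm_ne_zero_iff.2 hb
  rw [kelvinSq_eq_of_ne_zero hb, kelvinSq_eq_of_ne_zero hb, dist_inversion_center, hR]
  field_simp

variable [FiniteDimensional ℝ E] [MeasurableSpace E] [BorelSpace E]

/-- The integral `∫_{|w| < 1} (1 - |w|²)^s (|b|² |w - b / |b|²|²)^e dw` of a power of the Kelvin
kernel against a radial weight on the unit ball. -/
noncomputable def ballPotential (s e : ℝ) (b : E) : ℝ :=
  ∫ w in Metric.ball (0 : E) 1, (1 - ‖w‖ ^ 2) ^ s * kelvinSq b w ^ e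

theorem ballPotential_nonneg (s e : ℝ) {b : E} (hb : ‖b‖ < 1) : 0 ≤ ballPotential s e b :=
  setIntegral_nonneg measurableSet_ball fun _ hw =>
    one_sub_norm_sq_rpow_mul_kelvinSq_rpow_nonneg s e hb (mem_ball_zero_iff.1 hw)

variable [Nontrivial E]

theorem ballPotential_zero {s : ℝ} (hs : -1 < s) (e : ℝ) :
    ballPotential s e (0 : E) =
      π ^ ((finrank ℝ E : ℝ) / 2) * Gamma (s + 1) / Gamma (finrank ℝ E / 2 + s + 1) := by
  simp [ballPotential, kelvinSq_zero_left, integral_ball_one_sub_norm_sq_rpow hs]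

theorem integrableOn_one_sub_norm_sq_rpow_mul_kelvinSq_rpow {s : ℝ} (hs : -1 < s) (e : ℝ) {b : E}
    (hb : ‖b‖ < 1) :
    IntegrableOn (fun w => (1 - ‖w‖ ^ 2) ^ s * kelvinSq b w ^ e) (Metric.ball 0 1) := by
  obtain ⟨M, hM⟩ := exists_forall_kelvinSq_rpow_le (E := E) hb e
  refine ((integrableOn_ball_one_sub_norm_sq_rpow hs).mul_const M).mono'
    (Measurable.aestronglyMeasurable (by fun_prop))
    (ae_restrict_of_forall_mem measurableSet_ball fun w hw => ?_)
  have hw1 : ‖w‖ < 1 := mem_ball_zero_iff.1 hw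
  have hweight := one_sub_norm_sq_pos hw1
  rw [norm_of_nonneg (one_sub_norm_sq_rpow_mul_kelvinSq_rpow_nonneg s e hb hw1)]
  gcongr
  exact hM b w le_rfl hw1.le

theorem lintegral_one_sub_norm_sq_rpow_mul_kelvinSq_rpow {s : ℝ} (hs : -1 < s) (e : ℝ) {b : E}
    (hb : ‖b‖ < 1) :
    ∫⁻ w in Metric.ball (0 : E) 1, ENNReal.ofReal ((1 - ‖w‖ ^ 2) ^ s * kelvinSq b w ^ e) =
      ENNReal.ofReal (ballPotential s e b) :=
  (ofReal_integral_eq_lintegral_ofReal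
    (integrableOn_one_sub_norm_sq_rpow_mul_kelvinSq_rpow hs e hb)
    (ae_restrict_of_forall_mem measurableSet_ball fun _ hw =>
      one_sub_norm_sq_rpow_mul_kelvinSq_rpow_nonneg s e hb (mem_ball_zero_iff.1 hw))).symm

-- Change variables by the inversion centred at `b / ‖b‖ ^ 2` that preserves the unit ball.
theorem ballPotential_eq_rpow_mul (s e : ℝ) {b : E} (hb : ‖b‖ < 1) :
    ballPotential s e b = (1 - ‖b‖ ^ 2) ^ (s + finrank ℝ E + 2 * e) *
      ballPotential s (-s - finrank ℝ E - e) b := by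
  rcases eq_or_ne b 0 with rfl | hb0
  · simp [ballPotential, kelvinSq_zero_left]
  set c : E := (‖b‖ ^ 2)⁻¹ • b
  have hgap : 0 < 1 - ‖b‖ ^ 2 := one_sub_norm_sq_pos hb
  have hR2 : 0 < (1 - ‖b‖ ^ 2) / ‖b‖ ^ 2 := by
    have := norm_pos_iff.2 hb0
    positivity
  set R : ℝ := √((1 - ‖b‖ ^ 2) / ‖b‖ ^ 2)
  have hR0 : R ≠ 0 := (sqrt_pos.2 hR2).ne'
  have hR : R ^ 2 = (1 - ‖b‖ ^ 2) / ‖b‖ ^ 2 := sq_sqrt hR2.le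
  have hRc : R ^ 2 = ‖c‖ ^ 2 - 1 ^ 2 := hR.trans (norm_inv_norm_sq_smul_self_sq_sub_one hb0).symm
  have hball : ∀ w ≠ c, inversion c R w ∈ Metric.ball (0 : E) 1 ↔ w ∈ Metric.ball (0 : E) 1 :=
    fun w hw => by simpa using norm_inversion_lt_iff zero_le_one hR0 hRc hw
  rw [ballPotential, ballPotential, setIntegral_eq_setIntegral_inversion hR0 measurableSet_ball
    measurableSet_ball hball, ← integral_const_mul]
  refine setIntegral_congr_ae measurableSet_ball ?_
  filter_upwards [Measure.ae_ne volume c] with w hw hwb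
  have hw1 : ‖w‖ < 1 := mem_ball_zero_iff.1 hwb
  have hk := kelvinSq_pos hb hw1.le
  have hweight := one_sub_norm_sq_pos hw1
  have hinv : 1 - ‖inversion c R w‖ ^ 2 = (1 - ‖b‖ ^ 2) / kelvinSq b w * (1 - ‖w‖ ^ 2) := by
    rw [← sq_div_dist_eq_div_kelvinSq hb0 hR]
    linarith [norm_inversion_sq_sub_sq hRc hw]
  rw [hinv, kelvinSq_inversion hb0 hR, pow_mul, sq_div_dist_eq_div_kelvinSq hb0 hR, smul_eq_mul,
    ← rpow_natCast _ (finrank ℝ E), mul_rpow (by positivity) hweight.le, div_rpow hgap.le hk.le,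
    div_rpow hgap.le hk.le, div_rpow (by positivity) hk.le, ← rpow_natCast_mul hgap.le,
    rpow_add hgap, rpow_add hgap, rpow_sub hk, rpow_sub hk, rpow_neg hk.le]
  push_cast
  field_simp

theorem lintegral_ball_sq_sub_norm_sq_rpow_mul_kelvinSq_rpow {s : ℝ} (hs : -1 < s) (e : ℝ) {a : E}
    {τ : ℝ} (hτ : 0 < τ) (ha : ‖τ • a‖ < 1) :
    ∫⁻ w in Metric.ball (0 : E) τ, ENNReal.ofReal ((τ ^ 2 - ‖w‖ ^ 2) ^ s * kelvinSq a w ^ e) =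
      ENNReal.ofReal (τ ^ (2 * s + finrank ℝ E) * ballPotential s e (τ • a)) := by
  have hpow : τ ^ (2 * s + finrank ℝ E) = τ ^ finrank ℝ E * (τ ^ 2) ^ s := by
    rw [rpow_add hτ, rpow_natCast, ← rpow_natCast_mul hτ.le]
    push_cast
    ring
  rw [← lintegral_indicator measurableSet_ball, ← lintegral_comp_smul_of_pos volume _ hτ, hpow,
    mul_assoc, ENNReal.ofReal_mul (by positivity), ENNReal.ofReal_mul (by positivity),
    ← lintegral_one_sub_norm_sq_rpow_mul_kelvinSq_rpow hs e ha]
  congr 1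
  rw [← lintegral_const_mul' _ _ ENNReal.ofReal_ne_top, ← lintegral_indicator measurableSet_ball]
  refine lintegral_congr fun w => ?_
  have hiff : τ • w ∈ Metric.ball (0 : E) τ ↔ w ∈ Metric.ball (0 : E) 1 := by
    rw [mem_ball_zero_iff, mem_ball_zero_iff, norm_smul, norm_of_nonneg hτ.le,
      mul_lt_iff_lt_one_right hτ]
  by_cases hw : w ∈ Metric.ball (0 : E) 1
  · rw [indicator_of_mem (hiff.2 hw), indicator_of_mem hw, ← ENNReal.ofReal_mul (by positivity),
      kelvinSq_smul_right, norm_smul, norm_of_nonneg hτ.le, ← mul_assoc,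
      ← mul_rpow (by positivity) (one_sub_norm_sq_pos (mem_ball_zero_iff.1 hw)).le]
    ring_nf
  · rw [indicator_of_notMem (hiff.not.2 hw), indicator_of_notMem hw]

theorem lintegral_ball_lintegral_Ioo_mul_kelvinSq_rpow {s : ℝ} (hs : -1 < s) (e : ℝ) {a : E}
    {t : ℝ} (ha : ‖t • a‖ < 1) {φ : ℝ → ENNReal} (hφ : Measurable φ) :
    ∫⁻ w in Metric.ball (0 : E) t,
        (∫⁻ τ in Ioo ‖w‖ t, φ τ * ENNReal.ofReal ((τ ^ 2 - ‖w‖ ^ 2) ^ s)) *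
          ENNReal.ofReal (kelvinSq a w ^ e) =
      ∫⁻ τ in Ioo 0 t, φ τ * ENNReal.ofReal (τ ^ (2 * s + finrank ℝ E) *
        ballPotential s e (τ • a)) := by
  calc
    _ = ∫⁻ w, ∫⁻ τ in Ioo ‖w‖ t, φ τ * (ENNReal.ofReal ((τ ^ 2 - ‖w‖ ^ 2) ^ s) *
          ENNReal.ofReal (kelvinSq a w ^ e)) := by
      rw [← lintegral_indicator measurableSet_ball]
      congr 1 with w
      simp_rw [← mul_assoc, lintegral_mul_const' _ _ ENNReal.ofReal_ne_top]
      refine indicator_apply_eq_self.2 fun hw => ?_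
      rw [Ioo_eq_empty (by simpa using hw)]
      simp
    _ = ∫⁻ τ in Ioo 0 t, ∫⁻ w in {w | ‖w‖ < τ}, φ τ * (ENNReal.ofReal ((τ ^ 2 - ‖w‖ ^ 2) ^ s) *
          ENNReal.ofReal (kelvinSq a w ^ e)) :=
      lintegral_setLIntegral_Ioo_comm volume measurable_norm norm_nonneg (by fun_prop) t
    _ = _ := by
      refine setLIntegral_congr_fun measurableSet_Ioo fun τ ⟨hτ0, hτt⟩ => ?_
      have hτa : ‖τ • a‖ < 1 := (norm_smul_le_norm_smul_of_le hτ0.le hτt.le a).trans_lt ha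
      have hball : {w : E | ‖w‖ < τ} = Metric.ball 0 τ := by ext; simp
      rw [lintegral_const_mul _ (by fun_prop),
        ← lintegral_ball_sq_sub_norm_sq_rpow_mul_kelvinSq_rpow hs e hτ0 hτa, hball]
      congr 1
      refine setLIntegral_congr_fun measurableSet_ball fun w hw => (ENNReal.ofReal_mul ?_).symm
      have := mem_ball_zero_iff.1 hw
      exact rpow_nonneg (sub_nonneg.2 (by gcongr)) s

end BallPotential

section RadialDerivative

variable {E : Type*} [NormedAddCommGroup E] [InnerProductSpace ℝ E]

theorem hasDerivAt_kelvinSq_smul (b w : E) (t : ℝ) :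
    HasDerivAt (fun τ : ℝ => kelvinSq (τ • b) w)
      (-2 * inner ℝ b w + 2 * t * ‖b‖ ^ 2 * ‖w‖ ^ 2) t := by
  have hquad : (fun τ : ℝ => kelvinSq (τ • b) w) =
      fun τ => 1 - τ * (2 * inner ℝ b w) + τ ^ 2 * (‖b‖ ^ 2 * ‖w‖ ^ 2) := by
    funext τ
    rw [kelvinSq, real_inner_smul_left, norm_smul, mul_pow, norm_eq_abs, sq_abs]
    ring
  rw [hquad]
  refine ((((hasDerivAt_id t).mul_const _).const_sub 1).add
    ((hasDerivAt_pow 2 t).mul_const _)).congr_deriv ?_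
  simp only [Nat.cast_ofNat, Nat.add_one_sub_one, pow_one]
  ring

theorem abs_neg_two_mul_inner_add_le {b w : E} {t : ℝ} (hb : ‖t • b‖ ≤ 1) (hw : ‖w‖ ≤ 1) :
    |(-2 * inner ℝ b w + 2 * t * ‖b‖ ^ 2 * ‖w‖ ^ 2)| ≤ 4 * ‖b‖ := by
  rw [norm_smul, norm_eq_abs] at hb
  calc |(-2 * inner ℝ b w + 2 * t * ‖b‖ ^ 2 * ‖w‖ ^ 2)|
      ≤ |(-2 * inner ℝ b w)| + |2 * t * ‖b‖ ^ 2 * ‖w‖ ^ 2| := abs_add_le _ _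
    _ = 2 * |inner ℝ b w| + 2 * (|t| * ‖b‖) * ‖b‖ * ‖w‖ ^ 2 := by
      simp only [abs_mul, abs_neg, abs_two, abs_pow, abs_norm]
      ring
    _ ≤ 2 * (‖b‖ * 1) + 2 * 1 * ‖b‖ * 1 ^ 2 := by
      gcongr
      exact (abs_real_inner_le_norm b w).trans (by gcongr)
    _ = 4 * ‖b‖ := by ring

theorem hasDerivAt_one_sub_norm_smul_sq_rpow {b : E} (hb : ‖b‖ < 1) (p : ℝ) :
    HasDerivAt (fun t : ℝ => (1 - ‖t • b‖ ^ 2) ^ p)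
      (-(2 * ‖b‖ ^ 2) * p * (1 - ‖b‖ ^ 2) ^ (p - 1)) 1 := by
  simp_rw [norm_smul, mul_pow, norm_eq_abs, sq_abs]
  simpa using ((((hasDerivAt_pow 2 (1 : ℝ)).mul_const (‖b‖ ^ 2)).const_sub 1).rpow_const
    (p := p) (.inl (by simpa using (one_sub_norm_sq_pos hb).ne')))

variable [FiniteDimensional ℝ E] [MeasurableSpace E] [BorelSpace E] [Nontrivial E]

theorem hasDerivAt_ballPotential_smul {s : ℝ} (hs : -1 < s) (e : ℝ) {b : E} {t : ℝ}
    (hb : ‖t • b‖ < 1) :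
    HasDerivAt (fun τ : ℝ => ballPotential s e (τ • b))
      (∫ w in Metric.ball (0 : E) 1, (1 - ‖w‖ ^ 2) ^ s *
        ((-2 * inner ℝ b w + 2 * t * ‖b‖ ^ 2 * ‖w‖ ^ 2) * e * kelvinSq (t • b) w ^ (e - 1))) t := by
  obtain ⟨ρ, hbρ, hρ1⟩ := exists_between hb
  obtain ⟨M, hM⟩ := exists_forall_kelvinSq_rpow_le (E := E) hρ1 (e - 1)
  have hnhds : {τ : ℝ | ‖τ • b‖ < ρ} ∈ nhds t :=
    (isOpen_lt (by fun_prop) continuous_const).mem_nhds hbρ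
  refine (hasDerivAt_integral_of_dominated_loc_of_deriv_le
    (F := fun τ w => (1 - ‖w‖ ^ 2) ^ s * kelvinSq (τ • b) w ^ e)
    (F' := fun τ w => (1 - ‖w‖ ^ 2) ^ s *
      ((-2 * inner ℝ b w + 2 * τ * ‖b‖ ^ 2 * ‖w‖ ^ 2) * e * kelvinSq (τ • b) w ^ (e - 1)))
    (bound := fun w => (1 - ‖w‖ ^ 2) ^ s * (4 * ‖b‖ * |e| * M)) hnhds
    (.of_forall fun τ => Measurable.aestronglyMeasurable (by fun_prop))
    (integrableOn_one_sub_norm_sq_rpow_mul_kelvinSq_rpow hs e hb)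
    (Measurable.aestronglyMeasurable (by fun_prop))
    (ae_restrict_of_forall_mem measurableSet_ball fun w hw τ hτ => ?_)
    ((integrableOn_ball_one_sub_norm_sq_rpow hs).mul_const _)
    (ae_restrict_of_forall_mem measurableSet_ball fun w hw τ hτ => ?_)).2
  all_goals
    have hw1 : ‖w‖ < 1 := mem_ball_zero_iff.1 hw
    have hτ1 : ‖τ • b‖ < 1 := lt_trans hτ hρ1
    have hk := kelvinSq_pos hτ1 hw1.le
  · have hweight := one_sub_norm_sq_pos hw1
    rw [norm_mul, norm_mul, norm_mul, norm_of_nonneg (rpow_nonneg hweight.le s),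
      norm_of_nonneg (rpow_nonneg hk.le _), norm_eq_abs, norm_eq_abs]
    gcongr
    · exact abs_neg_two_mul_inner_add_le hτ1.le hw1.le
    · exact hM (τ • b) w (le_of_lt hτ) hw1.le
  · exact ((hasDerivAt_kelvinSq_smul b w τ).rpow_const (.inl hk.ne')).const_mul _

theorem continuousAt_ballPotential_smul {s : ℝ} (hs : -1 < s) (e : ℝ) {b : E} {t : ℝ}
    (hb : ‖t • b‖ < 1) : ContinuousAt (fun τ : ℝ => ballPotential s e (τ • b)) t :=
  (hasDerivAt_ballPotential_smul hs e hb).continuousAt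

-- Euler's identity for `kelvinSq`, which is a polynomial of degree two along rays, expresses its
-- radial derivative through `kelvinSq` itself and the weight `1 - ‖w‖ ^ 2`.
theorem hasDerivAt_ballPotential_smul_one {s : ℝ} (hs : -1 < s) (e : ℝ) {b : E} (hb : ‖b‖ < 1) :
    HasDerivAt (fun τ : ℝ => ballPotential s e (τ • b))
      (e * (ballPotential s e b - (1 - ‖b‖ ^ 2) * ballPotential s (e - 1) b -
        ‖b‖ ^ 2 * ballPotential (s + 1) (e - 1) b)) 1 := by
  refine (hasDerivAt_ballPotential_smul hs e (by rwa [one_smul])).congr_deriv ?_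
  have h := integrableOn_one_sub_norm_sq_rpow_mul_kelvinSq_rpow hs e hb
  have h' := (integrableOn_one_sub_norm_sq_rpow_mul_kelvinSq_rpow hs (e - 1) hb).const_mul
    (1 - ‖b‖ ^ 2)
  have h'' := (integrableOn_one_sub_norm_sq_rpow_mul_kelvinSq_rpow (s := s + 1) (by linarith)
    (e - 1) hb).const_mul (‖b‖ ^ 2)
  have hsub : IntegrableOn (fun w => (1 - ‖w‖ ^ 2) ^ s * kelvinSq b w ^ e -
      (1 - ‖b‖ ^ 2) * ((1 - ‖w‖ ^ 2) ^ s * kelvinSq b w ^ (e - 1))) (Metric.ball 0 1) := h.sub h'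
  simp only [ballPotential]
  rw [← integral_const_mul, ← integral_const_mul, ← integral_sub h h', ← integral_sub hsub h'',
    ← integral_const_mul]
  refine setIntegral_congr_fun measurableSet_ball fun w hw => ?_
  have hw1 : ‖w‖ < 1 := mem_ball_zero_iff.1 hw
  have hk := kelvinSq_pos hb hw1.le
  have hke : kelvinSq b w ^ e = kelvinSq b w ^ (e - 1) * kelvinSq b w := by
    rw [← rpow_add_one hk.ne', sub_add_cancel]
  have heuler : -2 * inner ℝ b w + 2 * 1 * ‖b‖ ^ 2 * ‖w‖ ^ 2 =
      kelvinSq b w - (1 - ‖b‖ ^ 2) - ‖b‖ ^ 2 * (1 - ‖w‖ ^ 2) := by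
    rw [kelvinSq]
    ring
  simp only [one_smul]
  rw [heuler, hke, rpow_add_one (one_sub_norm_sq_pos hw1).ne']
  ring

theorem lintegral_Ioo_rpow_mul_ballPotential_smul {s : ℝ} (hs : -1 < s) (e : ℝ) {b : E} {t : ℝ}
    (ht : 0 < t) (hb : ‖t • b‖ < 1) :
    ∫⁻ τ in Ioo 0 t, ENNReal.ofReal
        (2 * (s + 1) * τ ^ (2 * s + 1 + finrank ℝ E) * ballPotential s e (τ • b)) =
      ENNReal.ofReal (t ^ (2 * (s + 1) + finrank ℝ E) * ballPotential (s + 1) e (t • b)) := by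
  have hs1 : 0 < s + 1 := by linarith
  calc
    _ = ∫⁻ τ in Ioo 0 t, ENNReal.ofReal (2 * (s + 1) * τ) *
          ENNReal.ofReal (τ ^ (2 * s + finrank ℝ E) * ballPotential s e (τ • b)) := by
      refine setLIntegral_congr_fun measurableSet_Ioo fun τ ⟨hτ0, _⟩ => ?_
      rw [← ENNReal.ofReal_mul (by positivity), add_right_comm, rpow_add_one hτ0.ne']
      ring_nf
    _ = ∫⁻ w in Metric.ball (0 : E) t, ENNReal.ofReal ((t ^ 2 - ‖w‖ ^ 2) ^ (s + 1)) *
          ENNReal.ofReal (kelvinSq b w ^ e) := by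
      rw [← lintegral_ball_lintegral_Ioo_mul_kelvinSq_rpow hs e hb (by fun_prop)]
      refine setLIntegral_congr_fun measurableSet_ball fun w hw => ?_
      rw [← lintegral_Ioo_mul_sq_sub_sq_rpow hs (norm_nonneg w) (mem_ball_zero_iff.1 hw).le]
      congr 1
      refine setLIntegral_congr_fun measurableSet_Ioo fun τ ⟨hτ, _⟩ => ?_
      have hτ0 : 0 < τ := (norm_nonneg w).trans_lt hτ
      rw [← ENNReal.ofReal_mul (by positivity)]
    _ = _ := by
      rw [← lintegral_ball_sq_sub_norm_sq_rpow_mul_kelvinSq_rpow (by linarith) e ht hb]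
      refine setLIntegral_congr_fun measurableSet_ball fun w hw => (ENNReal.ofReal_mul ?_).symm
      have := mem_ball_zero_iff.1 hw
      exact rpow_nonneg (sub_nonneg.2 (by gcongr)) _

theorem continuousAt_rpow_mul_ballPotential_smul {s : ℝ} (hs : -1 < s) (e : ℝ) {b : E} {t : ℝ}
    (hb : ‖t • b‖ < 1) :
    ContinuousAt (fun τ : ℝ => 2 * (s + 1) * τ ^ (2 * s + 1 + finrank ℝ E) *
      ballPotential s e (τ • b)) t := by
  have hn : (1 : ℝ) ≤ finrank ℝ E := by exact_mod_cast finrank_pos (R := ℝ) (M := E)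
  exact ((continuousAt_rpow_const t _ (.inr (by linarith))).const_mul _).mul
    (continuousAt_ballPotential_smul hs e hb)

theorem rpow_mul_ballPotential_add_one_eq_integral {s : ℝ} (hs : -1 < s) (e : ℝ) {b : E} {t : ℝ}
    (ht : 0 < t) (hb : ‖t • b‖ < 1) :
    t ^ (2 * (s + 1) + finrank ℝ E) * ballPotential (s + 1) e (t • b) =
      ∫ τ in 0..t, 2 * (s + 1) * τ ^ (2 * s + 1 + finrank ℝ E) * ballPotential s e (τ • b) := by
  have hs1 : 0 < s + 1 := by linarith
  have hτb : ∀ τ ∈ Ioo 0 t, ‖τ • b‖ < 1 := fun τ ⟨hτ0, hτt⟩ =>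
    (norm_smul_le_norm_smul_of_le hτ0.le hτt.le b).trans_lt hb
  rw [intervalIntegral.integral_of_le ht.le, integral_Ioc_eq_integral_Ioo,
    integral_eq_lintegral_of_nonneg_ae, lintegral_Ioo_rpow_mul_ballPotential_smul hs e ht hb,
    ENNReal.toReal_ofReal]
  · have := ballPotential_nonneg (s + 1) e hb
    positivity
  · refine ae_restrict_of_forall_mem measurableSet_Ioo fun τ hτ => ?_
    have := ballPotential_nonneg s e (hτb τ hτ)
    have := hτ.1
    simp only [Pi.zero_apply]
    positivity
  · exact ContinuousOn.aestronglyMeasurable (fun τ hτ => (continuousAt_rpow_mul_ballPotential_smul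
      hs e (hτb τ hτ)).continuousWithinAt) measurableSet_Ioo

theorem hasDerivAt_rpow_mul_ballPotential_add_one {s : ℝ} (hs : -1 < s) (e : ℝ) {b : E}
    (hb : ‖b‖ < 1) :
    HasDerivAt (fun t : ℝ => t ^ (2 * (s + 1) + finrank ℝ E) * ballPotential (s + 1) e (t • b))
      (2 * (s + 1) * ballPotential s e b) 1 := by
  have hopen : IsOpen {t : ℝ | ‖t • b‖ < 1} := isOpen_lt (by fun_prop) continuous_const
  have hone : (1 : ℝ) ∈ {t : ℝ | ‖t • b‖ < 1} := by simpa using hb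
  have hcont : ContinuousOn (fun τ : ℝ => 2 * (s + 1) * τ ^ (2 * s + 1 + finrank ℝ E) *
      ballPotential s e (τ • b)) {t : ℝ | ‖t • b‖ < 1} := fun t ht =>
    (continuousAt_rpow_mul_ballPotential_smul hs e ht).continuousWithinAt
  have hsubset : uIcc 0 1 ⊆ {t : ℝ | ‖t • b‖ < 1} := by
    rw [uIcc_of_le zero_le_one]
    exact fun t ⟨ht0, ht1⟩ => (norm_smul_le_norm_smul_of_le ht0 ht1 b).trans_lt hone
  have hderiv := intervalIntegral.integral_hasDerivAt_right
    (hcont.mono hsubset).intervalIntegrable (hcont.stronglyMeasurableAtFilter hopen 1 hone)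
    (hcont.continuousAt (hopen.mem_nhds hone))
  simp only [one_rpow, mul_one, one_smul] at hderiv
  refine hderiv.congr_of_eventuallyEq ?_
  filter_upwards [hopen.mem_nhds hone, lt_mem_nhds zero_lt_one] with t ht ht0
  exact rpow_mul_ballPotential_add_one_eq_integral hs e ht0 ht

-- The inversion symmetry exchanges the exponents `-n / 2` and `-s - 1 - n / 2` of the weight
-- `s + 1`; differentiating that identity radially produces the weight `s`.
theorem ballPotential_one_sub_half_finrank_eq {s : ℝ} (hs : -1 < s) {b : E} (hb : ‖b‖ < 1) :
    ballPotential s (1 - (finrank ℝ E : ℝ) / 2) b =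
      (1 - ‖b‖ ^ 2) * ballPotential s (-(finrank ℝ E : ℝ) / 2) b +
        ‖b‖ ^ 2 * ballPotential (s + 1) (-(finrank ℝ E : ℝ) / 2) b := by
  set n : ℝ := (finrank ℝ E : ℝ) with hn
  have hs1 : s + 1 ≠ 0 := by linarith
  have hgap : 0 < 1 - ‖b‖ ^ 2 := one_sub_norm_sq_pos hb
  have hsymm_add_one {b : E} (hb : ‖b‖ < 1) : ballPotential (s + 1) (-n / 2) b =
      (1 - ‖b‖ ^ 2) ^ (s + 1) * ballPotential (s + 1) (-s - 1 - n / 2) b := by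
    rw [ballPotential_eq_rpow_mul (s + 1) _ hb, ← hn]
    ring_nf
  have hsymm : ballPotential s (1 - n / 2) b =
      (1 - ‖b‖ ^ 2) ^ (s + 1 + 1) * ballPotential s (-s - 1 - n / 2) b := by
    rw [ballPotential_eq_rpow_mul s _ hb, ← hn]
    ring_nf
  have hderiv := hasDerivAt_rpow_mul_ballPotential_add_one hs (-n / 2) hb
  have hderiv' := (hasDerivAt_one_sub_norm_smul_sq_rpow hb (s + 1)).mul
    (hasDerivAt_rpow_mul_ballPotential_add_one hs (-s - 1 - n / 2) hb)
  have hkey := hderiv.unique (hderiv'.congr_of_eventuallyEq (by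
    have hnhds : {t : ℝ | ‖t • b‖ < 1} ∈ nhds 1 :=
      (isOpen_lt (by fun_prop) continuous_const).mem_nhds (by simpa using hb)
    filter_upwards [hnhds] with t ht
    rw [Pi.mul_apply, hsymm_add_one ht]
    ring))
  simp only [one_smul, one_rpow, one_mul, add_sub_cancel_right, rpow_add_one hgap.ne'] at hkey
  rw [hsymm, hsymm_add_one hb]
  simp only [rpow_add_one hgap.ne']
  have hcancel : ballPotential s (-n / 2) b = (1 - ‖b‖ ^ 2) ^ s *
      ((1 - ‖b‖ ^ 2) * ballPotential s (-s - 1 - n / 2) b -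
        ‖b‖ ^ 2 * ballPotential (s + 1) (-s - 1 - n / 2) b) := by
    refine mul_left_cancel₀ (mul_ne_zero two_ne_zero hs1) ?_
    linear_combination hkey
  rw [hcancel]
  ring

theorem hasDerivAt_ballPotential_one_sub_half_finrank {s : ℝ} (hs : -1 < s) {a : E} {t : ℝ}
    (ht : t ≠ 0) (ha : ‖t • a‖ < 1) :
    HasDerivAt (fun τ : ℝ => ballPotential s (1 - (finrank ℝ E : ℝ) / 2) (τ • a)) 0 t := by
  have hone : HasDerivAt (fun τ : ℝ => ballPotential s (1 - (finrank ℝ E : ℝ) / 2) (τ • t • a))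
      0 (t / t) := by
    rw [div_self ht]
    refine (hasDerivAt_ballPotential_smul_one hs _ ha).congr_deriv ?_
    rw [ballPotential_one_sub_half_finrank_eq hs ha, sub_right_comm 1, sub_self, zero_sub,
      ← neg_div]
    ring
  simpa [Function.comp_def, smul_smul, div_mul_cancel₀ _ ht] using
    hone.comp t (h := fun τ => τ / t) ((hasDerivAt_id t).div_const t)

theorem ballPotential_one_sub_half_finrank {s : ℝ} (hs : -1 < s) {a : E} (ha : ‖a‖ < 1) :
    ballPotential s (1 - (finrank ℝ E : ℝ) / 2) a =
      π ^ ((finrank ℝ E : ℝ) / 2) * Gamma (s + 1) / Gamma (finrank ℝ E / 2 + s + 1) := by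
  have hτa : ∀ τ ∈ Icc (0 : ℝ) 1, ‖τ • a‖ < 1 := fun τ ⟨hτ0, hτ1⟩ =>
    (norm_smul_le_norm_smul_of_le hτ0 hτ1 a).trans_lt (by rwa [one_smul])
  obtain ⟨_, _, hslope⟩ := exists_hasDerivAt_eq_slope
    (fun τ : ℝ => ballPotential s (1 - (finrank ℝ E : ℝ) / 2) (τ • a)) 0 zero_lt_one
    (fun τ hτ => (continuousAt_ballPotential_smul hs _ (hτa τ hτ)).continuousWithinAt)
    fun τ hτ => hasDerivAt_ballPotential_one_sub_half_finrank hs hτ.1.ne'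
      (hτa τ (Ioo_subset_Icc_self hτ))
  simp only [Pi.zero_apply, one_smul, zero_smul, sub_zero, div_one] at hslope
  rw [← ballPotential_zero hs, ← sub_eq_zero, hslope]

theorem ballPotential_neg_add_finrank_div_two {α : ℝ} (hα : 0 < α) {a : E} (ha : ‖a‖ < 1) :
    ballPotential (α / 2 - 1) (-(α + finrank ℝ E) / 2) a =
      π ^ ((finrank ℝ E : ℝ) / 2) * Gamma (α / 2) / Gamma ((finrank ℝ E + α) / 2) *
        (1 - ‖a‖ ^ 2) ^ (-1 - α / 2) := by
  rw [ballPotential_eq_rpow_mul _ _ ha, mul_comm]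
  have hexp : -(α / 2 - 1) - finrank ℝ E - -(α + finrank ℝ E) / 2 = 1 - (finrank ℝ E : ℝ) / 2 := by
    ring
  rw [hexp, ballPotential_one_sub_half_finrank (by linarith) ha]
  ring_nf

end RadialDerivative

section GreenProfile

/-- The incomplete beta-type integral `∫₀^ζ (u + 1)^(-n / 2) u^(α / 2 - 1) du` through which the
Green function of a ball, or of its complement, in dimension `n` depends on its two points. -/
noncomputable def greenProfile (n α ζ : ℝ) : ℝ :=
  ∫ u in Ioo 0 ζ, (u + 1) ^ (-n / 2) * u ^ (α / 2 - 1)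

theorem greenProfile_nonneg (n α ζ : ℝ) : 0 ≤ greenProfile n α ζ := by
  refine setIntegral_nonneg measurableSet_Ioo fun u ⟨hu, _⟩ => ?_
  positivity

theorem lintegral_Ioo_add_one_rpow_mul_rpow (n : ℝ) {α : ℝ} (hα : 0 < α) (ζ : ℝ) :
    ∫⁻ u in Ioo 0 ζ, ENNReal.ofReal ((u + 1) ^ (-n / 2) * u ^ (α / 2 - 1)) =
      ENNReal.ofReal (greenProfile n α ζ) := by
  refine (ofReal_integral_eq_lintegral_ofReal ?_
    (ae_restrict_of_forall_mem measurableSet_Ioo fun u ⟨hu, _⟩ => ?_)).symm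
  · have hcont : ContinuousOn (fun u : ℝ => (u + 1) ^ (-n / 2)) (Icc 0 ζ) :=
      .rpow_const (by fun_prop) fun u hu => .inl (by linarith [hu.1])
    have hrpow : IntegrableOn (fun u : ℝ => u ^ (α / 2 - 1)) (Icc 0 ζ) :=
      ((intervalIntegral.intervalIntegrable_rpow' (by linarith)).1).congr_set_ae
        Ioc_ae_eq_Icc.symm
    exact (hrpow.continuousOn_mul hcont isCompact_Icc).mono_set Ioo_subset_Icc_self
  · simp only [Pi.zero_apply]
    positivity

theorem measurable_greenProfile (n : ℝ) {α : ℝ} (hα : 0 < α) : Measurable (greenProfile n α) := by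
  have hmono : Monotone fun ζ =>
      ∫⁻ u in Ioo 0 ζ, ENNReal.ofReal ((u + 1) ^ (-n / 2) * u ^ (α / 2 - 1)) :=
    fun _ _ h => lintegral_mono_set (Ioo_subset_Ioo_right h)
  convert hmono.measurable.ennreal_toReal with ζ
  rw [lintegral_Ioo_add_one_rpow_mul_rpow n hα, ENNReal.toReal_ofReal (greenProfile_nonneg n α ζ)]

theorem lintegral_Ioo_rpow_mul_sq_sub_sq_rpow (n : ℝ) {α : ℝ} (hα : 0 < α) {ρ t : ℝ} (hρ : 0 < ρ)
    (hρt : ρ ≤ t) :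
    ∫⁻ τ in Ioo ρ t, ENNReal.ofReal (2 * τ ^ (1 - n) * (τ ^ 2 - ρ ^ 2) ^ (α / 2 - 1)) =
      ENNReal.ofReal (ρ ^ (α - n) * greenProfile n α (t ^ 2 / ρ ^ 2 - 1)) := by
  have hsub := lintegral_Ioo_comp_mul_deriv (g := fun τ => τ ^ 2 / ρ ^ 2 - 1)
    (g' := fun τ => 2 * τ / ρ ^ 2) hρt (by fun_prop)
    (fun τ _ => by simpa using ((hasDerivAt_pow 2 τ).div_const (ρ ^ 2)).sub_const 1)
    (fun τ ⟨hτ, _⟩ => by have := hρ.trans hτ; positivity)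
    fun u => ENNReal.ofReal (ρ ^ (α - n)) * ENNReal.ofReal ((u + 1) ^ (-n / 2) * u ^ (α / 2 - 1))
  rw [lintegral_const_mul' _ _ ENNReal.ofReal_ne_top, div_self (by positivity), sub_self,
    lintegral_Ioo_add_one_rpow_mul_rpow n hα, ← ENNReal.ofReal_mul (by positivity)] at hsub
  rw [← hsub]
  refine setLIntegral_congr_fun measurableSet_Ioo fun τ ⟨hτ, _⟩ => ?_
  have hτ0 : 0 < τ := hρ.trans hτ
  have hgap : 0 < τ ^ 2 - ρ ^ 2 := sub_pos.2 (by gcongr)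
  have hadd : (τ ^ 2 / ρ ^ 2 - 1 + 1) ^ (-n / 2) = τ ^ (-n) / ρ ^ (-n) := by
    rw [sub_add_cancel, div_rpow (by positivity) (by positivity), ← rpow_natCast_mul hτ0.le,
      ← rpow_natCast_mul hρ.le]
    push_cast
    ring_nf
  have hmul : (τ ^ 2 / ρ ^ 2 - 1) ^ (α / 2 - 1) =
      (τ ^ 2 - ρ ^ 2) ^ (α / 2 - 1) / (ρ ^ α / ρ ^ 2) := by
    rw [div_sub_one (by positivity), div_rpow hgap.le (by positivity), ← rpow_natCast_mul hρ.le,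
      ← rpow_natCast ρ 2, ← rpow_sub hρ]
    push_cast
    ring_nf
  rw [← ENNReal.ofReal_mul (by positivity), ← ENNReal.ofReal_mul (by positivity), hadd, hmul,
    rpow_sub hρ, rpow_sub hτ0, rpow_one, rpow_neg hτ0.le, rpow_neg hρ.le]
  congr 1
  field_simp

theorem lintegral_Ioo_rpow_mul_one_sub_mul_sq_rpow {α c t : ℝ} (hα : 0 < α) (ht : 0 ≤ t)
    (hc : c * t ^ 2 < 1) :
    ∫⁻ τ in Ioo 0 t, ENNReal.ofReal (τ ^ (α - 1) * (1 - c * τ ^ 2) ^ (-1 - α / 2)) =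
      ENNReal.ofReal (t ^ α * (1 - c * t ^ 2) ^ (-α / 2) / α) := by
  have hgap : ∀ τ ∈ Icc 0 t, 0 < 1 - c * τ ^ 2 := fun τ ⟨hτ0, hτt⟩ => by
    have hsq : τ ^ 2 ≤ t ^ 2 := by gcongr
    rcases le_total c 0 with hc0 | hc0 <;> nlinarith [sq_nonneg τ]
  rw [lintegral_Ioo_ofReal_deriv (g := fun τ => τ ^ α * (1 - c * τ ^ 2) ^ (-α / 2) / α) ht
    (fun τ hτ => ?_) (fun τ hτ => ?_) fun τ hτ => ?_]
  · simp [zero_rpow hα.ne']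
  · exact (((continuousAt_rpow_const τ _ (.inr hα.le)).mul (ContinuousAt.rpow_const (by fun_prop)
      (.inl (hgap τ hτ).ne'))).div_const α).continuousWithinAt
  · have hτ0 : 0 < τ := hτ.1
    have hg := hgap τ (Ioo_subset_Icc_self hτ)
    have hquad : HasDerivAt (fun τ => 1 - c * τ ^ 2) (-(c * (2 * τ))) τ := by
      simpa using ((hasDerivAt_pow 2 τ).const_mul c).const_sub 1
    refine (((hasDerivAt_rpow_const (.inl hτ0.ne')).mul (hquad.rpow_const
      (p := -α / 2) (.inl hg.ne'))).div_const α).congr_deriv ?_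
    have hpow : (1 - c * τ ^ 2) ^ (-α / 2) =
        (1 - c * τ ^ 2) ^ (-α / 2 - 1) * (1 - c * τ ^ 2) := by
      rw [← rpow_add_one hg.ne', sub_add_cancel]
    rw [hpow, show -1 - α / 2 = -α / 2 - 1 by ring, rpow_sub_one hτ0.ne']
    field_simp
    ring
  · have := hgap τ (Ioo_subset_Icc_self hτ)
    have := hτ.1
    positivity

variable {E : Type*} [NormedAddCommGroup E] [InnerProductSpace ℝ E] [FiniteDimensional ℝ E]
  [MeasurableSpace E] [BorelSpace E] [Nontrivial E]

theorem lintegral_Ioo_rpow_mul_ballPotential_neg_add_finrank_div_two {α : ℝ} (hα : 0 < α) {a : E}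
    {t : ℝ} (ht : 0 < t) (ha : ‖t • a‖ < 1) :
    ∫⁻ τ in Ioo 0 t, ENNReal.ofReal (2 * τ ^ (α - 1) *
        ballPotential (α / 2 - 1) (-(α + finrank ℝ E) / 2) (τ • a)) =
      ENNReal.ofReal (2 / α * (π ^ ((finrank ℝ E : ℝ) / 2) * Gamma (α / 2) /
        Gamma ((finrank ℝ E + α) / 2)) * t ^ α * (1 - ‖t • a‖ ^ 2) ^ (-α / 2)) := by
  have hnorm (τ : ℝ) : ‖τ • a‖ ^ 2 = ‖a‖ ^ 2 * τ ^ 2 := by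
    rw [norm_smul, mul_pow, norm_eq_abs, sq_abs, mul_comm]
  set C : ℝ := π ^ ((finrank ℝ E : ℝ) / 2) * Gamma (α / 2) / Gamma ((finrank ℝ E + α) / 2)
  have : 0 ≤ C := by
    have := Gamma_pos_of_pos (half_pos hα)
    have := Gamma_pos_of_pos (s := (finrank ℝ E + α) / 2) (by positivity)
    positivity
  calc
    _ = ∫⁻ τ in Ioo 0 t, ENNReal.ofReal (2 * C) *
          ENNReal.ofReal (τ ^ (α - 1) * (1 - ‖a‖ ^ 2 * τ ^ 2) ^ (-1 - α / 2)) := by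
      refine setLIntegral_congr_fun measurableSet_Ioo fun τ ⟨hτ0, hτt⟩ => ?_
      rw [ballPotential_neg_add_finrank_div_two hα
        ((norm_smul_le_norm_smul_of_le hτ0.le hτt.le a).trans_lt ha), hnorm,
        ← ENNReal.ofReal_mul (by positivity)]
      congr 1
      ring
    _ = _ := by
      rw [lintegral_const_mul' _ _ ENNReal.ofReal_ne_top,
        lintegral_Ioo_rpow_mul_one_sub_mul_sq_rpow hα ht.le ?_,
        ← ENNReal.ofReal_mul (by positivity), hnorm]
      · ring_nf
      · rw [← hnorm]
        exact (sq_lt_one_iff₀ (norm_nonneg _)).2 ha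

theorem lintegral_ball_greenProfile_mul_kelvinSq_rpow {α : ℝ} (hα : 0 < α) {a : E} {t : ℝ}
    (ht : 0 < t) (ha : ‖t • a‖ < 1) :
    ∫⁻ w in Metric.ball (0 : E) t, ENNReal.ofReal (‖w‖ ^ (α - finrank ℝ E) *
        greenProfile (finrank ℝ E) α (t ^ 2 / ‖w‖ ^ 2 - 1) *
          kelvinSq a w ^ (-(α + finrank ℝ E) / 2)) =
      ENNReal.ofReal (2 / α * (π ^ ((finrank ℝ E : ℝ) / 2) * Gamma (α / 2) /
        Gamma ((finrank ℝ E + α) / 2)) * t ^ α * (1 - ‖t • a‖ ^ 2) ^ (-α / 2)) := by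
  rw [← lintegral_Ioo_rpow_mul_ballPotential_neg_add_finrank_div_two hα ht ha]
  set n : ℝ := (finrank ℝ E : ℝ)
  calc
    _ = ∫⁻ w in Metric.ball (0 : E) t, (∫⁻ τ in Ioo ‖w‖ t, ENNReal.ofReal (2 * τ ^ (1 - n)) *
          ENNReal.ofReal ((τ ^ 2 - ‖w‖ ^ 2) ^ (α / 2 - 1))) *
            ENNReal.ofReal (kelvinSq a w ^ (-(α + n) / 2)) := by
      refine setLIntegral_congr_fun_ae measurableSet_ball ?_
      filter_upwards [Measure.ae_ne volume (0 : E)] with w hw hwt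
      have hw0 : 0 < ‖w‖ := norm_pos_iff.2 hw
      rw [ENNReal.ofReal_mul (mul_nonneg (by positivity) (greenProfile_nonneg ..)),
        ← lintegral_Ioo_rpow_mul_sq_sub_sq_rpow n hα hw0 (mem_ball_zero_iff.1 hwt).le]
      congr 1
      refine setLIntegral_congr_fun measurableSet_Ioo fun τ ⟨hτ, _⟩ => ENNReal.ofReal_mul ?_
      have := hw0.trans hτ
      positivity
    _ = ∫⁻ τ in Ioo 0 t, ENNReal.ofReal (2 * τ ^ (1 - n)) *
          ENNReal.ofReal (τ ^ (2 * (α / 2 - 1) + n) *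
            ballPotential (α / 2 - 1) (-(α + n) / 2) (τ • a)) :=
      lintegral_ball_lintegral_Ioo_mul_kelvinSq_rpow (by linarith) _ ha (by fun_prop)
    _ = _ := by
      refine setLIntegral_congr_fun measurableSet_Ioo fun τ ⟨hτ0, _⟩ => ?_
      have hpow : τ ^ (α - 1) = τ ^ (1 - n) * τ ^ (2 * (α / 2 - 1) + n) := by
        rw [← rpow_add hτ0]
        ring_nf
      rw [← ENNReal.ofReal_mul (by positivity), hpow]
      ring_nf

theorem integral_ball_greenProfile_mul_kelvinSq_rpow {α : ℝ} (hα : 0 < α) {a : E} {t : ℝ}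
    (ht : 0 < t) (ha : ‖t • a‖ < 1) :
    ∫ w in Metric.ball (0 : E) t, ‖w‖ ^ (α - finrank ℝ E) *
        greenProfile (finrank ℝ E) α (t ^ 2 / ‖w‖ ^ 2 - 1) *
          kelvinSq a w ^ (-(α + finrank ℝ E) / 2) =
      2 / α * (π ^ ((finrank ℝ E : ℝ) / 2) * Gamma (α / 2) / Gamma ((finrank ℝ E + α) / 2)) *
        t ^ α * (1 - ‖t • a‖ ^ 2) ^ (-α / 2) := by
  have hgreen := measurable_greenProfile (finrank ℝ E) hα
  rw [integral_eq_lintegral_of_nonneg_ae _ (Measurable.aestronglyMeasurable (by fun_prop)),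
    lintegral_ball_greenProfile_mul_kelvinSq_rpow hα ht ha, ENNReal.toReal_ofReal]
  · have := Gamma_pos_of_pos (half_pos hα)
    have := Gamma_pos_of_pos (s := (finrank ℝ E + α) / 2) (by positivity)
    have := one_sub_norm_sq_pos ha
    positivity
  · refine ae_restrict_of_forall_mem measurableSet_ball fun w hw => ?_
    have := kelvinSq_pos_of_norm_smul_lt_one ht ha (mem_ball_zero_iff.1 hw).le
    have := greenProfile_nonneg (finrank ℝ E) α (t ^ 2 / ‖w‖ ^ 2 - 1)
    simp only [Pi.zero_apply]
    positivity

end GreenProfile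

section Exterior

variable {E : Type*} [NormedAddCommGroup E] [InnerProductSpace ℝ E]

theorem norm_inversion_zero (r : ℝ) (w : E) : ‖inversion 0 r w‖ = r ^ 2 / ‖w‖ := by
  simpa using dist_inversion_center 0 w r

theorem lt_norm_inversion_zero_iff {r : ℝ} (hr : 0 < r) {w : E} (hw : w ≠ 0) :
    r < ‖inversion 0 r w‖ ↔ w ∈ Metric.ball (0 : E) r := by
  rw [norm_inversion_zero, mem_ball_zero_iff, lt_div_iff₀ (norm_pos_iff.2 hw), sq,
    mul_lt_mul_iff_right₀ hr]

theorem norm_sub_inversion_zero_sq (v : E) {w : E} (hw : w ≠ 0) {r : ℝ} (hr : r ≠ 0) :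
    ‖v - inversion 0 r w‖ ^ 2 = (r ^ 2 / ‖w‖) ^ 2 * kelvinSq ((r ^ 2)⁻¹ • v) w := by
  have hw' : ‖w‖ ≠ 0 := norm_ne_zero_iff.2 hw
  have hinv : inversion 0 r w = (r / ‖w‖) ^ 2 • w := by simp [inversion]
  rw [norm_sub_sq_real, norm_inversion_zero, hinv, real_inner_smul_right, kelvinSq,
    real_inner_smul_left, norm_smul, norm_of_nonneg (by positivity)]
  field_simp
  ring

theorem norm_sub_inversion_zero_rpow {v w : E} {r : ℝ} (hr : r ≠ 0) (hw : w ≠ 0)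
    (hk : 0 ≤ kelvinSq ((r ^ 2)⁻¹ • v) w) (p : ℝ) :
    ‖v - inversion 0 r w‖ ^ p = (r ^ 2 / ‖w‖) ^ p * kelvinSq ((r ^ 2)⁻¹ • v) w ^ (p / 2) := by
  have hsq (u : ℝ) (hu : 0 ≤ u) : u ^ p = (u ^ 2) ^ (p / 2) := by
    rw [← rpow_natCast_mul hu, Nat.cast_two, mul_div_cancel₀ _ two_ne_zero]
  rw [hsq _ (norm_nonneg _), norm_sub_inversion_zero_sq v hw hr, mul_rpow (by positivity) hk,
    ← hsq _ (by positivity)]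

theorem pow_mul_norm_sub_inversion_rpow_mul_norm_sub_inversion_rpow (n : ℕ) (α : ℝ)
    {c v z : E} {R : ℝ} (hR : R ≠ 0) (hv : v ≠ c) (hz : z ≠ c) :
    (R / dist z c) ^ (2 * n) * (‖c - inversion c R z‖ ^ (α - n) *
        ‖v - inversion c R z‖ ^ (-(α + n))) =
      (R ^ 2) ^ α / (‖c - v‖ ^ α * ‖c - v‖ ^ n) * ‖inversion c R v - z‖ ^ (-(α + n)) := by
  have hD : 0 < dist z c := dist_pos.2 hz
  have hV : 0 < ‖c - v‖ := norm_pos_iff.2 (sub_ne_zero.2 hv.symm)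
  have hR2 : 0 < R ^ 2 := by positivity
  have hc : ‖c - inversion c R z‖ = R ^ 2 / dist z c := by
    rw [← dist_eq_norm, dist_center_inversion, dist_comm]
  have hvz : ‖v - inversion c R z‖ = ‖c - v‖ * ‖inversion c R v - z‖ / dist z c := by
    rw [eq_div_iff hD.ne']
    simpa only [dist_eq_norm, norm_sub_rev c v, mul_comm ‖v - c‖] using
      (dist_inversion_mul_dist_center_eq (R := R) hv hz).symm
  rw [hc, hvz, div_rpow hR2.le hD.le, div_rpow (by positivity) hD.le,
    mul_rpow hV.le (norm_nonneg _), rpow_neg hV.le, rpow_neg hD.le, rpow_add hV, rpow_add hD,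
    rpow_sub hR2, rpow_sub hD, pow_mul', div_pow]
  simp only [rpow_natCast]
  field_simp
  ring

theorem pow_mul_norm_sub_inversion_zero_rpow (n : ℕ) (α : ℝ) {v w : E} {r : ℝ} (hr : r ≠ 0)
    (hw : w ≠ 0) (hk : 0 ≤ kelvinSq ((r ^ 2)⁻¹ • v) w) :
    (r / ‖w‖) ^ (2 * n) * ‖v - inversion 0 r w‖ ^ (-(α + n)) =
      ((r ^ 2) ^ α)⁻¹ * (‖w‖ ^ (α - n) * kelvinSq ((r ^ 2)⁻¹ • v) w ^ (-(α + n) / 2)) := by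
  have hw0 : 0 < ‖w‖ := norm_pos_iff.2 hw
  have hr2 : 0 < r ^ 2 := by positivity
  rw [norm_sub_inversion_zero_rpow hr hw hk, div_rpow hr2.le hw0.le, rpow_neg hr2.le,
    rpow_neg hw0.le, rpow_add hr2, rpow_add hw0, rpow_sub hw0, pow_mul', div_pow]
  simp only [rpow_natCast]
  field_simp
  ring

theorem norm_sq_sub_mul_norm_inversion_sq_sub_div {c z : E} {r R : ℝ} (hr : r ≠ 0) (hR0 : R ≠ 0)
    (hR : R ^ 2 = ‖c‖ ^ 2 - r ^ 2) (hz : z ≠ c) :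
    (‖c‖ ^ 2 - r ^ 2) * (‖inversion c R z‖ ^ 2 - r ^ 2) /
      (r ^ 2 * ‖c - inversion c R z‖ ^ 2) = ‖z‖ ^ 2 / r ^ 2 - 1 := by
  have hD : dist z c ≠ 0 := dist_ne_zero.2 hz
  rw [norm_inversion_sq_sub_sq hR hz, ← dist_eq_norm, dist_center_inversion, dist_comm c z, ← hR]
  field_simp

theorem sq_sub_norm_inversion_sq_rpow {c v : E} {r R : ℝ} (hR : R ^ 2 = ‖c‖ ^ 2 - r ^ 2)
    (hvc : v ≠ c) (hv : ‖v‖ < r) (α : ℝ) :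
    (r ^ 2 - ‖inversion c R v‖ ^ 2) ^ (-α / 2) =
      ‖c - v‖ ^ α / ((R ^ 2) ^ (α / 2) * (r ^ 2 - ‖v‖ ^ 2) ^ (α / 2)) := by
  have hgap : 0 < r ^ 2 - ‖v‖ ^ 2 := sub_pos.2 (by gcongr)
  have hinv : r ^ 2 - ‖inversion c R v‖ ^ 2 = R ^ 2 * (r ^ 2 - ‖v‖ ^ 2) / ‖c - v‖ ^ 2 := by
    rw [← neg_sub, norm_inversion_sq_sub_sq hR hvc, dist_comm, dist_eq_norm]
    ring
  rw [hinv, neg_div, rpow_neg (by positivity), div_rpow (by positivity) (by positivity),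
    mul_rpow (by positivity) hgap.le, ← rpow_natCast_mul (norm_nonneg _), Nat.cast_two,
    mul_div_cancel₀ _ two_ne_zero, inv_div]

variable [FiniteDimensional ℝ E] [MeasurableSpace E] [BorelSpace E] [Nontrivial E]

theorem integral_lt_norm_greenProfile_mul_norm_sub_rpow {α : ℝ} (hα : 0 < α) {v : E} {r : ℝ}
    (hv : ‖v‖ < r) :
    ∫ z in {z : E | r < ‖z‖}, greenProfile (finrank ℝ E) α (‖z‖ ^ 2 / r ^ 2 - 1) *
        ‖v - z‖ ^ (-(α + finrank ℝ E)) =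
      2 / α * (π ^ ((finrank ℝ E : ℝ) / 2) * Gamma (α / 2) / Gamma ((finrank ℝ E + α) / 2)) *
        (r ^ 2 - ‖v‖ ^ 2) ^ (-α / 2) := by
  have hr : 0 < r := (norm_nonneg v).trans_lt hv
  have hgap : 0 < r ^ 2 - ‖v‖ ^ 2 := sub_pos.2 (by gcongr)
  have hnorm : ‖r • (r ^ 2)⁻¹ • v‖ = ‖v‖ / r := by
    rw [norm_smul, norm_smul, norm_inv, norm_pow, norm_of_nonneg hr.le]
    field_simp
  have ha : ‖r • (r ^ 2)⁻¹ • v‖ < 1 := by rwa [hnorm, div_lt_one hr]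
  have hscale : (1 - (‖v‖ / r) ^ 2) ^ (-α / 2) = r ^ α * (r ^ 2 - ‖v‖ ^ 2) ^ (-α / 2) := by
    rw [div_pow, one_sub_div (by positivity), div_rpow hgap.le (by positivity),
      ← rpow_natCast_mul hr.le, Nat.cast_two, mul_div_cancel₀ _ two_ne_zero, rpow_neg hr.le,
      div_inv_eq_mul, mul_comm]
  rw [setIntegral_eq_setIntegral_inversion hr.ne' (measurableSet_lt (by fun_prop) (by fun_prop))
    measurableSet_ball fun w hw => lt_norm_inversion_zero_iff hr hw]
  have hball := integral_ball_greenProfile_mul_kelvinSq_rpow hα hr ha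
  rw [hnorm, hscale] at hball
  calc
    _ = ∫ w in Metric.ball (0 : E) r, ((r ^ 2) ^ α)⁻¹ * (‖w‖ ^ (α - finrank ℝ E) *
          greenProfile (finrank ℝ E) α (r ^ 2 / ‖w‖ ^ 2 - 1) *
            kelvinSq ((r ^ 2)⁻¹ • v) w ^ (-(α + finrank ℝ E) / 2)) := by
      refine setIntegral_congr_ae measurableSet_ball ?_
      filter_upwards [Measure.ae_ne volume (0 : E)] with w hw hwr
      have hk := kelvinSq_pos_of_norm_smul_lt_one hr ha (mem_ball_zero_iff.1 hwr).le
      have harg : (r ^ 2 / ‖w‖) ^ 2 / r ^ 2 = r ^ 2 / ‖w‖ ^ 2 := by field_simp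
      rw [norm_inversion_zero, harg, dist_zero_right, smul_eq_mul]
      linear_combination greenProfile (finrank ℝ E) α (r ^ 2 / ‖w‖ ^ 2 - 1) *
        pow_mul_norm_sub_inversion_zero_rpow (finrank ℝ E) α hr.ne' hw hk.le
    _ = _ := by
      rw [integral_const_mul, hball, ← rpow_natCast_mul hr.le, Nat.cast_two, two_mul, rpow_add hr]
      field_simp

theorem integral_lt_norm_greenProfile_mul_norm_sub_rpow_mul_norm_sub_rpow {α : ℝ} (hα : 0 < α)
    {x v : E} {r : ℝ} (hv : ‖v‖ < r) (hx : r < ‖x‖) :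
    ∫ y in {y : E | r < ‖y‖}, greenProfile (finrank ℝ E) α
          ((‖x‖ ^ 2 - r ^ 2) * (‖y‖ ^ 2 - r ^ 2) / (r ^ 2 * ‖x - y‖ ^ 2)) *
        ‖x - y‖ ^ (α - finrank ℝ E) * ‖v - y‖ ^ (-(α + finrank ℝ E)) =
      2 / α * (π ^ ((finrank ℝ E : ℝ) / 2) * Gamma (α / 2) / Gamma ((finrank ℝ E + α) / 2)) *
        ((‖x‖ ^ 2 - r ^ 2) ^ (α / 2) /
          ((r ^ 2 - ‖v‖ ^ 2) ^ (α / 2) * ‖x - v‖ ^ finrank ℝ E)) := by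
  have hr : 0 < r := (norm_nonneg v).trans_lt hv
  have hvx : v ≠ x := fun h => (hv.trans hx).ne (congrArg _ h)
  have hV : 0 < ‖x - v‖ := norm_pos_iff.2 (sub_ne_zero.2 hvx.symm)
  have hR2 : 0 < ‖x‖ ^ 2 - r ^ 2 := sub_pos.2 (by gcongr)
  have hgap : 0 < r ^ 2 - ‖v‖ ^ 2 := sub_pos.2 (by gcongr)
  set R : ℝ := √(‖x‖ ^ 2 - r ^ 2)
  have hR : R ^ 2 = ‖x‖ ^ 2 - r ^ 2 := sq_sqrt hR2.le
  have hR0 : 0 < R := sqrt_pos.2 hR2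
  have hv' : ‖inversion x R v‖ < r := (norm_inversion_lt_iff hr.le hR0.ne' hR hvx).2 hv
  have hR_rpow : (R ^ 2) ^ α = (R ^ 2) ^ (α / 2) * (R ^ 2) ^ (α / 2) := by
    rw [← rpow_add (by positivity), add_halves]
  have hmeas : MeasurableSet {z : E | r < ‖z‖} := measurableSet_lt (by fun_prop) (by fun_prop)
  rw [setIntegral_eq_setIntegral_inversion hR0.ne' hmeas hmeas
    fun z hz => lt_norm_inversion_iff hr.le hR0.ne' hR hz]
  calc
    _ = ∫ z in {z : E | r < ‖z‖}, (R ^ 2) ^ α / (‖x - v‖ ^ α * ‖x - v‖ ^ finrank ℝ E) *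
          (greenProfile (finrank ℝ E) α (‖z‖ ^ 2 / r ^ 2 - 1) *
            ‖inversion x R v - z‖ ^ (-(α + finrank ℝ E))) := by
      refine setIntegral_congr_ae hmeas ?_
      filter_upwards [Measure.ae_ne volume x] with z hz _
      rw [norm_sq_sub_mul_norm_inversion_sq_sub_div hr.ne' hR0.ne' hR hz, smul_eq_mul]
      linear_combination greenProfile (finrank ℝ E) α (‖z‖ ^ 2 / r ^ 2 - 1) *
        pow_mul_norm_sub_inversion_rpow_mul_norm_sub_inversion_rpow (finrank ℝ E) α hR0.ne' hvx hz
    _ = _ := by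
      rw [integral_const_mul, integral_lt_norm_greenProfile_mul_norm_sub_rpow hα hv',
        sq_sub_norm_inversion_sq_rpow hR hvx hv, hR_rpow, ← hR]
      field_simp

end Exterior

theorem abs_Gamma_neg_mul_Gamma_mul_sin {β : ℝ} (hβ0 : 0 < β) (hβ1 : β < 1) :
    |Gamma (-β)| * Gamma β * sin (π * β) = π / β := by
  have hsin : 0 < sin (π * β) :=
    sin_pos_of_pos_of_lt_pi (by positivity) (mul_lt_of_lt_one_right pi_pos hβ1)
  have hrefl : Gamma β * Gamma (1 - β) * sin (π * β) = π := by
    rw [Real.Gamma_mul_Gamma_one_sub, div_mul_cancel₀ _ hsin.ne']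
  have habs : Gamma (1 - β) = β * |Gamma (-β)| := by
    rw [← abs_of_pos (Gamma_pos_of_pos (sub_pos.2 hβ1)), ← neg_add_eq_sub,
      Gamma_add_one (neg_ne_zero.2 hβ0.ne'), abs_mul, abs_neg, abs_of_pos hβ0]
  rw [eq_div_iff hβ0.ne']
  linear_combination hrefl - Gamma β * sin (π * β) * habs

theorem Gamma_prefactor_mul_eq {n α : ℝ} (hn : 0 < n) (hα0 : 0 < α) (hα2 : α < 2) :
    Gamma ((n + α) / 2) * Gamma (n / 2) / (π ^ n * |Gamma (-α / 2)| * Gamma (α / 2) ^ 2) *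
        (2 / α * (π ^ (n / 2) * Gamma (α / 2) / Gamma ((n + α) / 2))) =
      π ^ (-(n / 2 + 1)) * Gamma (n / 2) * sin (π * α / 2) := by
  have := Gamma_pos_of_pos (half_pos hα0)
  have := Gamma_pos_of_pos (s := (n + α) / 2) (by positivity)
  have hkey := abs_Gamma_neg_mul_Gamma_mul_sin (half_pos hα0) (by linarith)
  rw [← neg_div, ← mul_div_assoc] at hkey
  have habs : |Gamma (-α / 2)| ≠ 0 := by
    intro h
    rw [h, zero_mul, zero_mul] at hkey
    exact (by positivity : π / (α / 2) ≠ 0) hkey.symm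
  have hpow : π ^ n = π ^ (n / 2) * π ^ (n / 2) := by rw [← rpow_add pi_pos, add_halves]
  rw [hpow, neg_add, rpow_add pi_pos, rpow_neg pi_pos.le, rpow_neg_one]
  rw [eq_div_iff (by positivity)] at hkey
  generalize |Gamma (-α / 2)| = G at *
  generalize sin (π * α / 2) = S at *
  field_simp
  linear_combination -2 * hkey

theorem marginalise_preceding_position_gives_BGR_general {E : Type*} [NormedAddCommGroup E]
    [InnerProductSpace ℝ E] [FiniteDimensional ℝ E] [MeasurableSpace E] [BorelSpace E]
    [Nontrivial E] {α r : ℝ} (hα0 : 0 < α) (hα2 : α < 2) {x v : E} (hv : ‖v‖ < r) (hx : r < ‖x‖) :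
    Gamma ((finrank ℝ E + α) / 2) * Gamma (finrank ℝ E / 2) /
        (π ^ (finrank ℝ E : ℝ) * |Gamma (-α / 2)| * Gamma (α / 2) ^ 2) *
      ∫ y in {y : E | r < ‖y‖},
        (∫ u in Ioo 0 ((‖x‖ ^ 2 - r ^ 2) * (‖y‖ ^ 2 - r ^ 2) / (r ^ 2 * ‖x - y‖ ^ 2)),
            (u + 1) ^ (-(finrank ℝ E : ℝ) / 2) * u ^ (α / 2 - 1)) *
          ‖x - y‖ ^ (α - finrank ℝ E) * ‖v - y‖ ^ (-(α + finrank ℝ E)) =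
      π ^ (-((finrank ℝ E : ℝ) / 2 + 1)) * Gamma (finrank ℝ E / 2) * sin (π * α / 2) *
        ((‖x‖ ^ 2 - r ^ 2) ^ (α / 2) /
          ((r ^ 2 - ‖v‖ ^ 2) ^ (α / 2) * ‖x - v‖ ^ finrank ℝ E)) := by
  have hn : (0 : ℝ) < finrank ℝ E := by exact_mod_cast finrank_pos
  have hintegral := integral_lt_norm_greenProfile_mul_norm_sub_rpow_mul_norm_sub_rpow hα0 hv hx
  simp only [greenProfile] at hintegral
  rw [hintegral, ← mul_assoc, Gamma_prefactor_mul_eq hn hα0 hα2]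

theorem marginalise_preceding_position_gives_BGR
    (d : ℕ) (hd : 2 ≤ d) (α : ℝ) (hα0 : 0 < α) (hα2 : α < 2)
    (r : ℝ) (hr : 0 < r)
    (x v : EuclideanSpace ℝ (Fin d)) (hv : ‖v‖ < r) (hx : r < ‖x‖) :
    (Real.Gamma (((d : ℝ) + α) / 2) * Real.Gamma ((d : ℝ) / 2) /
        (π ^ (d : ℝ) * |Real.Gamma (-α / 2)| * Real.Gamma (α / 2) ^ 2)) *
      ∫ y in {y : EuclideanSpace ℝ (Fin d) | r < ‖y‖},
        (∫ u in Ioo (0 : ℝ) ((‖x‖ ^ 2 - r ^ 2) * (‖y‖ ^ 2 - r ^ 2) / (r ^ 2 * ‖x - y‖ ^ 2)),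
            (u + 1) ^ (-(d : ℝ) / 2) * u ^ (α / 2 - 1)) *
          ‖x - y‖ ^ (α - (d : ℝ)) * ‖v - y‖ ^ (-(α + (d : ℝ)))
      = π ^ (-((d : ℝ) / 2 + 1)) * Real.Gamma ((d : ℝ) / 2) * Real.sin (π * α / 2) *
          ((‖x‖ ^ 2 - r ^ 2) ^ (α / 2) /
            ((r ^ 2 - ‖v‖ ^ 2) ^ (α / 2) * ‖x - v‖ ^ d)) := by
  have : Nontrivial (Fin d) := Fin.nontrivial_iff_two_le.2 hd
  simpa only [finrank_euclideanSpace_fin] using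
    marginalise_preceding_position_gives_BGR_general hα0 hα2 hv hx
end

section
/- Fix x ∈ ℝ^d with x ≠ 0 and 0 < r₀ < |x|, and let f : ℝ^d → ℝ be continuous with support contained in the closed ball {y : |y| ≤ r₀}. Then lim_{r→|x|⁻} [ (|x|^2 - r^2)^{α/2} ∫_{|y|<r} (r^2 - |y|^2)^{-α/2} |x - y|^{-d} f(y) dy ] / [ ∫_0^{(|x|^2 - r^2)/r^2} (u+1)^{-d/2} u^{α/2-1} du ] = (α/2) |x|^α ∫_{|y|<|x|} (|x|^2 - |y|^2)^{-α/2} |x - y|^{-d} f(y) dy. (This is the analytic limit underlying Proposition 5.1 on the excursion overshoot measure.) -/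
open MeasureTheory Real Set Filter

/-!
On the ball of radius `r₀` that carries `f`, the kernel `(r² - |y|²) ^ (-α/2)` converges boundedly
as `r` increases to `|x|`, so dominated convergence settles the integral over `y`. The remaining
factor is, with `ε = (|x|² - r²) / r²`, equal to `r ^ α` times the ratio of `ε ^ (α/2)` and
`∫₀^ε (u + 1) ^ (-d/2) u ^ (α/2 - 1) du`; as `(u + 1) ^ (-d/2) → 1` at the origin, this ratio tends
to `α/2` by the fundamental theorem of calculus for the measure `u ^ (α/2 - 1) du`.
-/

open scoped Topology

section PowerWeight

variable {a : ℝ}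

theorem integrableOn_Ioo_zero_rpow_sub_one (ha : 0 < a) (ε : ℝ) :
    IntegrableOn (fun u : ℝ => u ^ (a - 1)) (Ioo 0 ε) := by
  rcases le_or_gt ε 0 with hε | hε
  · simp [hε]
  · exact (intervalIntegral.integrableOn_Ioo_rpow_iff hε).2 (by linarith)

theorem setIntegral_Ioo_zero_rpow_sub_one (ha : 0 < a) {ε : ℝ} (hε : 0 ≤ ε) :
    ∫ u in Ioo 0 ε, u ^ (a - 1) = ε ^ a / a := by
  rw [← integral_Ioc_eq_integral_Ioo, ← intervalIntegral.integral_of_le hε,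
    integral_rpow (Or.inl (by linarith)), sub_add_cancel, zero_rpow ha.ne', sub_zero]

theorem tendsto_setIntegral_mul_rpow_div_rpow (ha : 0 < a) {c : ℝ} {w : ℝ → ℝ}
    (hw : Tendsto w (𝓝[>] 0) (𝓝 c)) (hwm : StronglyMeasurableAtFilter w (𝓝[>] 0)) :
    Tendsto (fun ε : ℝ => (∫ u in Ioo 0 ε, w u * u ^ (a - 1)) / ε ^ a) (𝓝[>] 0) (𝓝 (c / a)) := by
  let ν : Measure ℝ := volume.withDensity fun u => ENNReal.ofReal (u ^ (a - 1))
  have setIntegral_ν (g : ℝ → ℝ) (ε : ℝ) :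
      ∫ u in Ioo 0 ε, g u ∂ν = ∫ u in Ioo 0 ε, g u * u ^ (a - 1) := by
    rw [setIntegral_withDensity_eq_setIntegral_toReal_smul (by fun_prop) (by simp) _
      measurableSet_Ioo]
    refine setIntegral_congr_fun measurableSet_Ioo fun u hu => ?_
    simp only [ENNReal.toReal_ofReal (rpow_nonneg hu.1.le _), smul_eq_mul, mul_comm]
  have real_ν {ε : ℝ} (hε : 0 < ε) : ν.real (Ioo 0 ε) = ε ^ a / a := by
    simpa [setIntegral_Ioo_zero_rpow_sub_one ha hε.le] using setIntegral_ν (fun _ => 1) ε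
  have finiteAt_ν : ν.FiniteAtFilter (𝓝[>] 0) := by
    refine ⟨Ioo 0 1, Ioo_mem_nhdsGT one_pos, ?_⟩
    rw [withDensity_apply _ measurableSet_Ioo]
    exact (integrableOn_Ioo_zero_rpow_sub_one ha 1).lintegral_lt_top
  have measurableAt_ν : StronglyMeasurableAtFilter w (𝓝[>] 0) ν :=
    hwm.imp fun s hs => ⟨hs.1, hs.2.mono_ac ((withDensity_absolutelyContinuous _ _).restrict s)⟩
  have Ioo_tendsto : Tendsto (fun ε : ℝ => Ioo 0 ε) (𝓝[>] 0) (𝓝[>] (0 : ℝ)).smallSets := by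
    refine (nhdsGT_basis 0).smallSets.tendsto_right_iff.2 fun δ hδ => ?_
    filter_upwards [Ioo_mem_nhdsGT hδ] with ε hε using Ioo_subset_Ioo_right hε.2.le
  have ftc := (hw.mono_left inf_le_left).integral_sub_linear_isLittleO_ae
    measurableAt_ν finiteAt_ν Ioo_tendsto
    (fun ε => ε ^ a / a) (by filter_upwards [self_mem_nhdsWithin] with ε hε using real_ν hε)
  have average_tendsto := (ftc.tendsto_div_nhds_zero.add_const c).div_const a
  rw [zero_add] at average_tendsto
  refine average_tendsto.congr' ?_
  filter_upwards [self_mem_nhdsWithin] with ε hε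
  have : ε ^ a ≠ 0 := (rpow_pos_of_pos hε a).ne'
  simp only [setIntegral_ν, smul_eq_mul]
  field_simp
  ring

theorem tendsto_rpow_div_setIntegral_add_one_rpow_mul_rpow (ha : 0 < a) (p : ℝ) :
    Tendsto (fun ε : ℝ => ε ^ a / ∫ u in Ioo 0 ε, (u + 1) ^ p * u ^ (a - 1))
      (𝓝[>] 0) (𝓝 a) := by
  have weight_tendsto : Tendsto (fun u : ℝ => (u + 1) ^ p) (𝓝[>] 0) (𝓝 1) := by
    have : ContinuousAt (fun u : ℝ => (u + 1) ^ p) 0 :=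
      ContinuousAt.rpow_const (by fun_prop) (Or.inl (by norm_num))
    simpa using this.tendsto.mono_left nhdsWithin_le_nhds
  have weight_measurable : Measurable fun u : ℝ => (u + 1) ^ p := by fun_prop
  simpa using (tendsto_setIntegral_mul_rpow_div_rpow ha weight_tendsto
    weight_measurable.stronglyMeasurable.stronglyMeasurableAtFilter).inv₀ (by positivity)

theorem tendsto_sq_sub_sq_div_sq_nhdsLT {R : ℝ} (hR : 0 < R) :
    Tendsto (fun r : ℝ => (R ^ 2 - r ^ 2) / r ^ 2) (𝓝[<] R) (𝓝[>] 0) := by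
  refine tendsto_nhdsWithin_iff.2 ⟨?_, ?_⟩
  · have : ContinuousAt (fun r : ℝ => (R ^ 2 - r ^ 2) / r ^ 2) R :=
      ContinuousAt.div (by fun_prop) (by fun_prop) (by positivity)
    simpa using this.tendsto.mono_left nhdsWithin_le_nhds
  · filter_upwards [Ioo_mem_nhdsLT hR] with r ⟨hr, hrR⟩
    exact div_pos (sub_pos.2 (pow_lt_pow_left₀ hrR hr.le two_ne_zero)) (pow_pos hr 2)

theorem tendsto_sq_sub_sq_rpow_div_setIntegral (ha : 0 < a) (p : ℝ) {R : ℝ} (hR : 0 < R) :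
    Tendsto (fun r : ℝ => (R ^ 2 - r ^ 2) ^ a /
        ∫ u in Ioo 0 ((R ^ 2 - r ^ 2) / r ^ 2), (u + 1) ^ p * u ^ (a - 1))
      (𝓝[<] R) (𝓝 (a * (R ^ 2) ^ a)) := by
  have ratio_tendsto := (tendsto_rpow_div_setIntegral_add_one_rpow_mul_rpow ha p).comp
    (tendsto_sq_sub_sq_div_sq_nhdsLT hR)
  have rpow_tendsto : Tendsto (fun r : ℝ => (r ^ 2) ^ a) (𝓝[<] R) (𝓝 ((R ^ 2) ^ a)) := by
    have : ContinuousAt (fun r : ℝ => (r ^ 2) ^ a) R :=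
      ContinuousAt.rpow_const (by fun_prop) (Or.inr ha.le)
    exact this.tendsto.mono_left nhdsWithin_le_nhds
  refine (ratio_tendsto.mul rpow_tendsto).congr' ?_
  filter_upwards [Ioo_mem_nhdsLT hR] with r ⟨hr, hrR⟩
  have r_sq_le : r ^ 2 ≤ R ^ 2 := pow_le_pow_left₀ hr.le hrR.le 2
  rw [Function.comp_apply, div_rpow (sub_nonneg.2 r_sq_le) (sq_nonneg r), div_mul_eq_mul_div,
    div_mul_cancel₀ _ (rpow_pos_of_pos (pow_pos hr 2) a).ne']

end PowerWeight

section SupportInBall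

variable {E F : Type*} [NormedAddCommGroup E] [MeasurableSpace E] [OpensMeasurableSpace E]
  [NormedAddCommGroup F] [NormedSpace ℝ F] {μ : Measure E} {r₀ : ℝ} {g : E → F}

theorem continuousAt_setIntegral_closedBall_comp_sq_sub_norm_sq_smul {h : ℝ → ℝ}
    (hh : ContinuousOn h (Ioi 0)) (hr₀ : 0 ≤ r₀) (hg : IntegrableOn g (Metric.closedBall 0 r₀) μ)
    {R : ℝ} (hR : r₀ < R) :
    ContinuousAt
      (fun r : ℝ => ∫ y in Metric.closedBall 0 r₀, h (r ^ 2 - ‖y‖ ^ 2) • g y ∂μ) R := by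
  obtain ⟨r₁, hr₁, hr₁R⟩ := exists_between hR
  have near_R : Ioo r₁ (R + 1) ∈ 𝓝 R := Ioo_mem_nhds hr₁R (lt_add_one R)
  have arg_mem {r : ℝ} (hr : r ∈ Ioo r₁ (R + 1)) {y : E} (hy : y ∈ Metric.closedBall 0 r₀) :
      r ^ 2 - ‖y‖ ^ 2 ∈ Icc (r₁ ^ 2 - r₀ ^ 2) ((R + 1) ^ 2) := by
    have hy := mem_closedBall_zero_iff.1 hy
    constructor <;> nlinarith [hr.1, hr.2, norm_nonneg y]
  have Icc_subset : Icc (r₁ ^ 2 - r₀ ^ 2) ((R + 1) ^ 2) ⊆ Ioi 0 := fun s hs =>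
    (sub_pos.2 (pow_lt_pow_left₀ hr₁ hr₀ two_ne_zero)).trans_le hs.1
  obtain ⟨C, hC⟩ := isCompact_Icc.exists_bound_of_continuousOn (hh.mono Icc_subset)
  refine tendsto_integral_filter_of_dominated_convergence (fun y => C * ‖g y‖) ?_ ?_
    (hg.norm.const_mul C) ?_
  · filter_upwards [near_R] with r hr
    have : ContinuousOn (fun y : E => h (r ^ 2 - ‖y‖ ^ 2)) (Metric.closedBall 0 r₀) :=
      hh.comp (by fun_prop) fun y hy => Icc_subset (arg_mem hr hy)
    exact (this.aestronglyMeasurable measurableSet_closedBall).smul hg.aestronglyMeasurable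
  · filter_upwards [near_R] with r hr
    refine ae_restrict_of_forall_mem measurableSet_closedBall fun y hy => ?_
    rw [norm_smul]
    exact mul_le_mul_of_nonneg_right (hC _ (arg_mem hr hy)) (norm_nonneg _)
  · refine ae_restrict_of_forall_mem measurableSet_closedBall fun y hy => ?_
    have arg_pos := Icc_subset (arg_mem (mem_of_mem_nhds near_R) hy)
    have : ContinuousAt (fun r : ℝ => h (r ^ 2 - ‖y‖ ^ 2)) R :=
      (hh.continuousAt (Ioi_mem_nhds arg_pos)).comp'
        (f := fun r : ℝ => r ^ 2 - ‖y‖ ^ 2) (by fun_prop)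
    exact this.tendsto.smul_const (g y)

theorem continuousAt_setIntegral_comp_sq_sub_norm_sq_smul {h : ℝ → ℝ}
    (hh : ContinuousOn h (Ioi 0)) (hr₀ : 0 ≤ r₀) (hg : Integrable g μ)
    (hgs : Function.support g ⊆ Metric.closedBall 0 r₀) {R : ℝ} (hR : r₀ < R) :
    ContinuousAt (fun r : ℝ => ∫ y in {y : E | ‖y‖ < r}, h (r ^ 2 - ‖y‖ ^ 2) • g y ∂μ) R := by
  refine (continuousAt_setIntegral_closedBall_comp_sq_sub_norm_sq_smul hh hr₀
    hg.integrableOn hR).congr ?_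
  filter_upwards [Ioi_mem_nhds hR] with r hr
  refine (setIntegral_eq_of_subset_of_forall_sdiff_eq_zero
    (measurableSet_lt measurable_norm measurable_const)
    (fun y hy => (mem_closedBall_zero_iff.1 hy).trans_lt hr) fun y hy => ?_).symm
  rw [Function.notMem_support.1 fun hys => hy.2 (hgs hys), smul_zero]

theorem integrable_norm_sub_rpow_smul (hg : Integrable g μ)
    (hgs : Function.support g ⊆ Metric.closedBall 0 r₀) {x : E} (hx : r₀ < ‖x‖) (q : ℝ) :
    Integrable (fun y => ‖x - y‖ ^ q • g y) μ := by
  have dist_mem {y : E} (hy : y ∈ Metric.closedBall 0 r₀) :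
      ‖x - y‖ ∈ Icc (‖x‖ - r₀) (‖x‖ + r₀) := by
    have hy := mem_closedBall_zero_iff.1 hy
    constructor <;> linarith [norm_sub_norm_le x y, norm_sub_le x y]
  have Icc_pos {s : ℝ} (hs : s ∈ Icc (‖x‖ - r₀) (‖x‖ + r₀)) : 0 < s := (sub_pos.2 hx).trans_le hs.1
  obtain ⟨C, hC⟩ := isCompact_Icc.exists_bound_of_continuousOn (f := fun s : ℝ => s ^ q)
    (continuousOn_id.rpow_const fun s hs => Or.inl (Icc_pos hs).ne')
  have kernel_continuousOn : ContinuousOn (fun y => ‖x - y‖ ^ q) (Metric.closedBall 0 r₀) :=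
    ContinuousOn.rpow_const (by fun_prop) fun y hy => Or.inl (Icc_pos (dist_mem hy)).ne'
  refine (integrableOn_iff_integrable_of_support_subset
    ((Function.support_smul_subset_right _ _).trans hgs)).1 ?_
  exact hg.integrableOn.bdd_smul C
    (kernel_continuousOn.aestronglyMeasurable measurableSet_closedBall)
    (ae_restrict_of_forall_mem measurableSet_closedBall fun y hy => hC _ (dist_mem hy))

end SupportInBall

theorem excursion_overshoot_limit_general {E : Type*} [NormedAddCommGroup E] [MeasurableSpace E]
    [OpensMeasurableSpace E] {μ : Measure E} {α : ℝ} (hα : 0 < α) (p q : ℝ) {x : E} {r₀ : ℝ}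
    (hr₀ : 0 ≤ r₀) (hr₀x : r₀ < ‖x‖) {f : E → ℝ} (hf : Integrable f μ)
    (hfs : Function.support f ⊆ Metric.closedBall 0 r₀) :
    Tendsto (fun r : ℝ =>
        ((‖x‖ ^ 2 - r ^ 2) ^ (α / 2) *
            ∫ y in {y : E | ‖y‖ < r},
              (r ^ 2 - ‖y‖ ^ 2) ^ (-(α / 2)) * ‖x - y‖ ^ q * f y ∂μ) /
          (∫ u in Ioo (0 : ℝ) ((‖x‖ ^ 2 - r ^ 2) / r ^ 2), (u + 1) ^ p * u ^ (α / 2 - 1)))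
      (𝓝[<] ‖x‖)
      (𝓝 ((α / 2) * ‖x‖ ^ α *
        ∫ y in {y : E | ‖y‖ < ‖x‖},
          (‖x‖ ^ 2 - ‖y‖ ^ 2) ^ (-(α / 2)) * ‖x - y‖ ^ q * f y ∂μ)) := by
  have ratio_tendsto := tendsto_sq_sub_sq_rpow_div_setIntegral (half_pos hα) p (hr₀.trans_lt hr₀x)
  have sq_rpow_half : (‖x‖ ^ 2) ^ (α / 2) = ‖x‖ ^ α := by
    rw [← rpow_natCast_mul (norm_nonneg x), Nat.cast_ofNat, mul_div_cancel₀ α two_ne_zero]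
  rw [sq_rpow_half] at ratio_tendsto
  have rpow_continuousOn : ContinuousOn (fun s : ℝ => s ^ (-(α / 2))) (Ioi 0) :=
    continuousOn_id.rpow_const fun s hs => Or.inl (ne_of_gt hs)
  have integral_tendsto := (continuousAt_setIntegral_comp_sq_sub_norm_sq_smul rpow_continuousOn hr₀
    (integrable_norm_sub_rpow_smul hf hfs hr₀x q)
    ((Function.support_smul_subset_right (‖x - ·‖ ^ q) f).trans hfs) hr₀x).tendsto.mono_left
      (nhdsWithin_le_nhds (s := Iio ‖x‖))
  simp only [smul_eq_mul, ← mul_assoc] at integral_tendsto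
  simpa only [div_mul_eq_mul_div] using ratio_tendsto.mul integral_tendsto

theorem excursion_overshoot_limit
    (d : ℕ) (hd : 2 ≤ d) (α : ℝ) (hα0 : 0 < α) (hα2 : α < 2)
    (x : EuclideanSpace ℝ (Fin d)) (hx : x ≠ 0)
    (r₀ : ℝ) (hr₀ : 0 < r₀) (hr₀x : r₀ < ‖x‖)
    (f : EuclideanSpace ℝ (Fin d) → ℝ) (hf : Continuous f)
    (hfs : Function.support f ⊆ Metric.closedBall 0 r₀) :
    Tendsto (fun r : ℝ =>
        ((‖x‖ ^ 2 - r ^ 2) ^ (α / 2) *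
            ∫ y in {y : EuclideanSpace ℝ (Fin d) | ‖y‖ < r},
              (r ^ 2 - ‖y‖ ^ 2) ^ (-(α / 2)) * ‖x - y‖ ^ (-(d : ℝ)) * f y) /
          (∫ u in Ioo (0 : ℝ) ((‖x‖ ^ 2 - r ^ 2) / r ^ 2),
            (u + 1) ^ (-(d : ℝ) / 2) * u ^ (α / 2 - 1)))
      (nhdsWithin ‖x‖ (Ioo 0 ‖x‖))
      (nhds ((α / 2) * ‖x‖ ^ α *
        ∫ y in {y : EuclideanSpace ℝ (Fin d) | ‖y‖ < ‖x‖},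
          (‖x‖ ^ 2 - ‖y‖ ^ 2) ^ (-(α / 2)) * ‖x - y‖ ^ (-(d : ℝ)) * f y)) := by
  rw [nhdsWithin_Ioo_eq_nhdsLT (norm_pos_iff.2 hx)]
  exact excursion_overshoot_limit_general hα0 (-(d : ℝ) / 2) (-(d : ℝ)) hr₀.le hr₀x
    (hf.integrable_of_hasCompactSupport
      (.of_support_subset_isCompact (isCompact_closedBall 0 r₀) hfs)) hfs
end
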